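/- arXiv:hep-th/9607234 — 3 statements merged into one kernel-verified Lean document; each statement's English description precedes it below -/
import Mathlib

section
/- Let N ≥ 1, let p ≥ 2 be even, and for t = (t_1,…,t_p) ∈ ℝ^p with t_p < 0 define the one-matrix model partition function Z_N(t) := (1/N!) ∫_{ℝ^N} Δ(λ_1,…,λ_N)² exp( Σ_{a=1}^N Σ_{k=1}^p t_k λ_a^k ) dλ. Then Z_N is smooth on the open set { t ∈ ℝ^p : t_p < 0 } and satisfies the string equation (lowest Virasoro constraint L_{−1}): Σ_{k=2}^p k t_k ∂Z_N/∂t_{k−1} + N t_1 Z_N = 0. -/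
open MeasureTheory

/-- The Vandermonde product `Δ(l₁,…,l_N) = ∏_{j<i} (l_i − l_j)`. -/
noncomputable def vdm {N : ℕ} (l : Fin N → ℝ) : ℝ :=
  ∏ i : Fin N, ∏ j ∈ Finset.Ioi i, (l j - l i)

/-- The pairing. -/
noncomputable def ppair {ι : Type} [Fintype ι] (T φ : ι → ℝ) : ℝ := ∑ i, T i * φ i

/-- Good weight functions. -/
def GoodW {ι α : Type} [Fintype ι] [MeasurableSpace α] (μ : Measure α) (φ : α → ι → ℝ)
    (U : Set (ι → ℝ)) (g : α → ℝ) : Prop :=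
  ∀ T ∈ U, Integrable (fun x => g x * Real.exp (ppair T (φ x))) μ

theorem ppair_add {ι : Type} [Fintype ι] (T S φ : ι → ℝ) :
    ppair (T + S) φ = ppair T φ + ppair S φ := by
  simp [ppair, add_mul, Finset.sum_add_distrib]

theorem ppair_single {ι : Type} [Fintype ι] [DecidableEq ι] (i : ι) (e : ℝ) (φ : ι → ℝ) :
    ppair (Pi.single i e) φ = e * φ i := by
  simp [ppair, Pi.single_apply]

theorem exp_abs_bd (y : ℝ) : |y| ≤ Real.exp y + Real.exp (-y) := by
  have h1 := Real.add_one_le_exp y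
  have h2 := Real.add_one_le_exp (-y)
  have h3 := Real.exp_pos y
  have h4 := Real.exp_pos (-y)
  rcases abs_cases y with ⟨h, _⟩ | ⟨h, _⟩ <;> rw [h] <;> linarith

theorem GoodW.mul_coord {ι α : Type} [Fintype ι] [MeasurableSpace α] {μ : Measure α}
    {φ : α → ι → ℝ} {U : Set (ι → ℝ)} (hU : IsOpen U) (hφ : ∀ i, Measurable (fun x => φ x i))
    {g : α → ℝ} (hg : GoodW μ φ U g) (i : ι) : GoodW μ φ U (fun x => g x * φ x i) := by
  classical
  intro T hT
  obtain ⟨r, hr, hb⟩ := Metric.isOpen_iff.1 hU T hT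
  have hmem : ∀ e : ℝ, |e| < r → T + Pi.single i e ∈ U := by
    intro e he
    apply hb
    simpa [Metric.mem_ball, dist_eq_norm, Pi.norm_single] using he
  have h1 := hg _ (hmem (r/2) (by rw [abs_of_pos] <;> linarith))
  have h2 := hg _ (hmem (-(r/2)) (by rw [abs_neg, abs_of_pos] <;> linarith))
  have h3 := ((h1.norm.add h2.norm).const_mul (r/2)⁻¹)
  refine h3.mono ?_ (Filter.Eventually.of_forall fun x => ?_)
  · have := (hg T hT).aestronglyMeasurable.mul (hφ i).aestronglyMeasurable
    refine this.congr (Filter.Eventually.of_forall fun x => ?_)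
    simp; ring
  · simp only [Pi.add_apply, ppair_add, ppair_single, Real.exp_add, norm_mul, Real.norm_eq_abs,
      Real.abs_exp]
    rw [abs_of_nonneg (a := (r/2)⁻¹) (by positivity),
      abs_of_nonneg (a := _ + _) (by positivity)]
    have hb := exp_abs_bd (r/2 * φ x i)
    rw [abs_mul, abs_of_pos (a := r/2) (by positivity)] at hb
    have hb' : |φ x i| ≤ (r/2)⁻¹ * (Real.exp (r/2 * φ x i) + Real.exp (-(r/2) * φ x i)) := by
      rw [le_inv_mul_iff₀ (by positivity), neg_mul]; exact hb
    calc |g x| * |φ x i| * Real.exp (ppair T (φ x))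
        = (|g x| * Real.exp (ppair T (φ x))) * |φ x i| := by ring
      _ ≤ (|g x| * Real.exp (ppair T (φ x))) * _ := mul_le_mul_of_nonneg_left hb' (by positivity)
      _ = _ := by ring

theorem integrable_sum_smul' {ι α E : Type} [Fintype ι] [MeasurableSpace α] {μ : Measure α}
    [NormedAddCommGroup E] [NormedSpace ℝ E] [CompleteSpace E]
    (c : ι → α → ℝ) (v : ι → E) (hc : ∀ i, Integrable (c i) μ) :
    Integrable (fun x => ∑ i, c i x • v i) μ ∧
      ∫ x, ∑ i, c i x • v i ∂μ = ∑ i, (∫ x, c i x ∂μ) • v i := by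
  refine ⟨integrable_finsetSum _ fun i _ => (hc i).smul_const _, ?_⟩
  rw [integral_finsetSum _ fun i _ => (hc i).smul_const _]
  exact Finset.sum_congr rfl fun i _ => integral_smul_const _ _

theorem GoodW.hasFDerivAt {ι α : Type} [Fintype ι] [MeasurableSpace α] {μ : Measure α}
    {φ : α → ι → ℝ} {U : Set (ι → ℝ)} (hU : IsOpen U) (hφ : ∀ i, Measurable (fun x => φ x i))
    {g : α → ℝ} (hg : GoodW μ φ U g) {T : ι → ℝ} (hT : T ∈ U) :
    HasFDerivAt (fun T => ∫ x, g x * Real.exp (ppair T (φ x)) ∂μ)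
      (∑ i, (∫ x, g x * φ x i * Real.exp (ppair T (φ x)) ∂μ) •
        (ContinuousLinearMap.proj i : (ι → ℝ) →L[ℝ] ℝ)) T := by
  classical
  obtain ⟨r, hr, hb⟩ := Metric.isOpen_iff.1 hU T hT
  have hgi : ∀ i, GoodW μ φ U (fun x => g x * φ x i) := fun i => hg.mul_coord hU hφ i
  obtain ⟨sg, hsg⟩ : ∃ sg : (ι → Bool) → (ι → ℝ), ∀ s i, sg s i = if s i then r/2 else -(r/2) :=
    ⟨fun s i => if s i then r/2 else -(r/2), fun _ _ => rfl⟩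
  have hmem : ∀ s, T + sg s ∈ U := by
    intro s
    apply hb
    rw [Metric.mem_ball, dist_eq_norm, add_sub_cancel_left]
    refine lt_of_le_of_lt ((pi_norm_le_iff_of_nonneg (r := r/2) (by positivity)).2 ?_)
      (by linarith)
    intro i
    rw [hsg]
    split_ifs
    · rw [Real.norm_eq_abs, abs_of_pos (by positivity)]
    · rw [norm_neg, Real.norm_eq_abs, abs_of_pos (by positivity)]
  obtain ⟨L, hL⟩ : ∃ L : α → ((ι → ℝ) →L[ℝ] ℝ), ∀ x, L x = ∑ i, φ x i • ContinuousLinearMap.proj i :=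
    ⟨fun x => ∑ i, φ x i • ContinuousLinearMap.proj i, fun _ => rfl⟩
  have hLapp : ∀ x S, L x S = ppair S (φ x) := by
    intro x S
    simp [hL, ppair, mul_comm]
  obtain ⟨F', hF'⟩ : ∃ F' : (ι → ℝ) → α → ((ι → ℝ) →L[ℝ] ℝ), ∀ S, F' S = fun x =>
      ∑ i, (g x * φ x i * Real.exp (ppair S (φ x))) • ContinuousLinearMap.proj i :=
    ⟨fun S x => ∑ i, (g x * φ x i * Real.exp (ppair S (φ x))) • ContinuousLinearMap.proj i,
      fun _ => rfl⟩
  have hF'L : ∀ S x, F' S x = (g x * Real.exp (ppair S (φ x))) • L x := by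
    intro S x
    simp only [hF', hL, Finset.smul_sum, smul_smul]
    refine Finset.sum_congr rfl fun i _ => ?_
    congr 1; ring
  have hint := integrable_sum_smul' (μ := μ) (fun i x => g x * φ x i * Real.exp (ppair T (φ x)))
    (fun i => (ContinuousLinearMap.proj i : (ι → ℝ) →L[ℝ] ℝ)) (fun i => hgi i T hT)
  rw [← hF' T] at hint
  have key := hasFDerivAt_integral_of_dominated_of_fderiv_le (𝕜 := ℝ) (μ := μ)
    (F := fun S x => g x * Real.exp (ppair S (φ x))) (F' := F') (x₀ := T)
    (s := Metric.ball T (r/2))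
    (bound := fun x => ∑ i, ∑ s : ι → Bool, ‖g x * φ x i * Real.exp (ppair (T + sg s) (φ x))‖)
    (Metric.ball_mem_nhds T (by positivity))
    ?_ (hg T hT) hint.1.aestronglyMeasurable ?_ ?_ ?_
  · rw [← hint.2]
    exact key
  · filter_upwards [hU.mem_nhds hT] with S hS using (hg S hS).aestronglyMeasurable
  · refine Filter.Eventually.of_forall fun x S hS => ?_
    simp only [hF']
    refine (norm_sum_le _ _).trans (Finset.sum_le_sum fun i _ => ?_)
    rw [norm_smul]
    have hproj : ‖(ContinuousLinearMap.proj i : (ι → ℝ) →L[ℝ] ℝ)‖ ≤ 1 := by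
      refine ContinuousLinearMap.opNorm_le_bound _ zero_le_one fun v => ?_
      simpa using norm_le_pi_norm v i
    refine (mul_le_of_le_one_right (norm_nonneg _) hproj).trans ?_
    let s0 : ι → Bool := fun i => decide (0 ≤ φ x i)
    refine le_trans ?_ (Finset.single_le_sum (f := fun s : ι → Bool =>
      ‖g x * φ x i * Real.exp (ppair (T + sg s) (φ x))‖) (fun _ _ => norm_nonneg _)
      (Finset.mem_univ s0))
    simp only [norm_mul, Real.norm_eq_abs, Real.abs_exp]
    refine mul_le_mul_of_nonneg_left (Real.exp_le_exp.2 ?_) (by positivity)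
    refine Finset.sum_le_sum fun j _ => ?_
    have hj : |S j - T j| ≤ r/2 := by
      have := norm_le_pi_norm (S - T) j
      rw [Metric.mem_ball, dist_eq_norm] at hS
      simp only [Pi.sub_apply, Real.norm_eq_abs] at this
      linarith
    rw [abs_le] at hj
    simp only [Pi.add_apply, hsg, s0, decide_eq_true_eq]
    split_ifs with h
    · exact mul_le_mul_of_nonneg_right (by linarith) h
    · exact mul_le_mul_of_nonpos_right (by linarith) (by linarith)
  · exact integrable_finsetSum _ fun i _ => integrable_finsetSum _ fun s _ =>
      (hgi i _ (hmem s)).norm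
  · refine Filter.Eventually.of_forall fun x S _ => ?_
    rw [hF'L]
    have h1 : HasFDerivAt (fun S => ppair S (φ x)) (L x) S := by
      have := (L x).hasFDerivAt (x := S)
      refine this.congr_of_eventuallyEq (Filter.Eventually.of_forall fun S => ?_)
      exact (hLapp x S).symm
    have h2 := (h1.exp).const_mul (g x)
    rwa [smul_smul] at h2

theorem GoodW.contDiffOn_nat {ι α : Type} [Fintype ι] [MeasurableSpace α] {μ : Measure α}
    {φ : α → ι → ℝ} {U : Set (ι → ℝ)} (hU : IsOpen U) (hφ : ∀ i, Measurable (fun x => φ x i))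
    (n : ℕ) : ∀ {g : α → ℝ}, GoodW μ φ U g →
    ContDiffOn ℝ n (fun T => ∫ x, g x * Real.exp (ppair T (φ x)) ∂μ) U := by
  induction n with
  | zero =>
    intro g hg
    exact contDiffOn_zero.2 fun T hT =>
      (hg.hasFDerivAt hU hφ hT).continuousAt.continuousWithinAt
  | succ n ih =>
    intro g hg
    push_cast
    rw [contDiffOn_succ_iff_fderiv_of_isOpen hU]
    refine ⟨fun T hT => (hg.hasFDerivAt hU hφ hT).differentiableAt.differentiableWithinAt,
      by simp, ?_⟩
    have : ContDiffOn ℝ n (fun T => ∑ i, (∫ x, g x * φ x i * Real.exp (ppair T (φ x)) ∂μ) •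
        (ContinuousLinearMap.proj i : (ι → ℝ) →L[ℝ] ℝ)) U :=
      ContDiffOn.sum fun i _ => (ih (hg.mul_coord hU hφ i)).smul contDiffOn_const
    exact this.congr fun T hT => (hg.hasFDerivAt hU hφ hT).fderiv

theorem half_int (p : ℕ) (hp : 2 ≤ p) (t : Fin p → ℝ) (ht : t ⟨p - 1, by omega⟩ < 0) :
    IntegrableOn (fun x : ℝ => Real.exp (∑ k : Fin p, t k * x ^ ((k : ℕ) + 1))) (Set.Ioi 0) := by
  have hc : Continuous (fun x : ℝ => Real.exp (∑ k : Fin p, t k * x ^ ((k : ℕ) + 1))) := by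
    fun_prop
  refine integrable_of_isBigO_exp_neg (b := 1) one_pos hc.continuousOn ?_
  obtain ⟨q, rfl⟩ : ∃ q, p = q + 2 := ⟨p - 2, by omega⟩
  have hlast : (⟨q + 2 - 1, by omega⟩ : Fin (q + 2)) = Fin.last (q + 1) := by ext; simp
  rw [hlast] at ht
  let R : Polynomial ℝ := ∑ k : Fin (q + 1), Polynomial.C (t k.castSucc) * Polynomial.X ^ ((k : ℕ) + 1)
    + Polynomial.X
  let P : Polynomial ℝ := Polynomial.C (t (Fin.last (q+1))) * Polynomial.X ^ (q + 2) + R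
  have hR : R.degree < (q + 2 : ℕ) := by
    refine lt_of_le_of_lt (Polynomial.degree_add_le _ _) (max_lt ?_ ?_)
    · refine lt_of_le_of_lt (Polynomial.degree_sum_le _ _) ?_
      rw [Finset.sup_lt_iff (by exact WithBot.bot_lt_coe _)]
      intro k _
      refine lt_of_le_of_lt (Polynomial.degree_C_mul_X_pow_le _ _) ?_
      have := k.isLt
      exact_mod_cast (by omega : (k : ℕ) + 1 < q + 2)
    · rw [Polynomial.degree_X]; exact_mod_cast (by omega : 1 < q + 2)
  have hd := Polynomial.degree_C_mul_X_pow (q + 2) ht.ne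
  have hdeg : P.degree = (q + 2 : ℕ) := by
    rw [Polynomial.degree_add_eq_left_of_degree_lt (by rw [hd]; exact hR), hd]
  have hlc : P.leadingCoeff = t (Fin.last (q+1)) := by
    rw [Polynomial.leadingCoeff_add_of_degree_lt' (by rw [hd]; exact hR),
      Polynomial.leadingCoeff_C_mul_X_pow]
  have hlim := P.tendsto_atBot_of_leadingCoeff_nonpos (by rw [hdeg]; exact_mod_cast (by omega : 0 < q + 2))
    (by rw [hlc]; exact ht.le)
  refine Asymptotics.IsBigO.of_bound 1 ?_
  filter_upwards [hlim.eventually (Filter.eventually_le_atBot 0)] with x hx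
  rw [Real.norm_eq_abs, Real.norm_eq_abs, Real.abs_exp, Real.abs_exp, one_mul, Real.exp_le_exp]
  simp only [P, R, Polynomial.eval_add, Polynomial.eval_mul, Polynomial.eval_C, Polynomial.eval_pow,
    Polynomial.eval_X, Polynomial.eval_finsetSum] at hx
  rw [Fin.sum_univ_castSucc]
  simp only [Fin.val_last, Fin.val_castSucc]
  linarith

theorem full_int (p : ℕ) (hp : 2 ≤ p) (hpe : Even p) (t : Fin p → ℝ)
    (ht : t ⟨p - 1, by omega⟩ < 0) :
    Integrable (fun x : ℝ => Real.exp (∑ k : Fin p, t k * x ^ ((k : ℕ) + 1))) := by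
  rw [← integrableOn_univ, ← Set.Iic_union_Ioi (a := (0:ℝ))]
  refine IntegrableOn.union ?_ (half_int p hp t ht)
  have h := half_int p hp (fun k => t k * (-1) ^ ((k : ℕ) + 1)) (by
    simp only
    rw [Nat.sub_add_cancel (by omega), hpe.neg_one_pow, mul_one]; exact ht)
  rw [← integrableOn_Ici_iff_integrableOn_Ioi] at h
  have h2 := h.comp_neg
  refine (integrableOn_congr_fun ?_ (by measurability)).1 (by simpa using h2)
  intro x _
  simp only
  congr 1
  refine Finset.sum_congr rfl fun k _ => ?_
  rw [mul_assoc, ← mul_pow]; simp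

theorem multi_int (N p : ℕ) (hp : 2 ≤ p) (hpe : Even p) (T : Fin N × Fin p → ℝ)
    (hT : ∀ a, T (a, ⟨p - 1, by omega⟩) < 0) :
    Integrable (fun x : Fin N → ℝ =>
      Real.exp (ppair T (fun i : Fin N × Fin p => x i.1 ^ ((i.2 : ℕ) + 1)))) := by
  have h := Integrable.fintype_prod (μ := fun _ : Fin N => (volume : Measure ℝ))
    (f := fun a x => Real.exp (∑ k : Fin p, T (a, k) * x ^ ((k : ℕ) + 1)))
    (fun a => full_int p hp hpe (fun k => T (a, k)) (hT a))
  refine h.congr (Filter.Eventually.of_forall fun x => ?_)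
  simp only [ppair, Fintype.sum_prod_type, Real.exp_sum]

theorem GoodW.prod {α ι : Type} [Fintype ι] [MeasurableSpace α] {μ : Measure α}
    {φ : α → ι → ℝ} {U : Set (ι → ℝ)} {κ : Type} (S : Finset κ) (h : κ → α → ℝ)
    (hh : ∀ k ∈ S, ∀ g, GoodW μ φ U g → GoodW μ φ U (fun x => g x * h k x)) :
    ∀ g, GoodW μ φ U g → GoodW μ φ U (fun x => g x * ∏ k ∈ S, h k x) := by
  classical
  induction S using Finset.induction_on with
  | empty => intro g hg; simpa using hg
  | insert k S hk ih =>
    intro g hg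
    have h1 := ih (fun j hj => hh j (Finset.mem_insert_of_mem hj)) _
      (hh k (Finset.mem_insert_self _ _) g hg)
    simp only [Finset.prod_insert hk]
    simpa only [mul_assoc] using h1

theorem GoodW.add {α ι : Type} [Fintype ι] [MeasurableSpace α] {μ : Measure α}
    {φ : α → ι → ℝ} {U : Set (ι → ℝ)} {g h : α → ℝ} (hg : GoodW μ φ U g) (hh : GoodW μ φ U h) :
    GoodW μ φ U (fun x => g x - h x) := by
  intro T hT
  simp only [sub_mul]
  exact (hg T hT).sub (hh T hT)

theorem smooth_part (N p : ℕ) (hp : 2 ≤ p) (hpe : Even p) :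
    ContDiffOn ℝ (⊤ : ℕ∞) (fun t : Fin p → ℝ => ∫ lam : Fin N → ℝ, (vdm lam) ^ 2 *
        Real.exp (∑ a : Fin N, ∑ k : Fin p, t k * lam a ^ ((k : ℕ) + 1)))
      { t : Fin p → ℝ | t ⟨p - 1, by omega⟩ < 0 } := by
  let φ : (Fin N → ℝ) → (Fin N × Fin p) → ℝ := fun x i => x i.1 ^ ((i.2 : ℕ) + 1)
  let U : Set (Fin N × Fin p → ℝ) := {T | ∀ a, T (a, ⟨p - 1, by omega⟩) < 0}
  have hU : IsOpen U := by
    simp only [U, Set.ofPred_forall]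
    exact isOpen_iInter_of_finite fun a => isOpen_lt (continuous_apply _) continuous_const
  have hφ : ∀ i, Measurable (fun x => φ x i) := fun i => (measurable_pi_apply i.1).pow_const _
  have h1 : GoodW volume φ U (fun _ => 1) := by
    intro T hT
    simpa only [one_mul] using multi_int N p hp hpe T hT
  have hl : ∀ g, GoodW volume φ U g → ∀ a, GoodW volume φ U (fun x => g x * x a) := by
    intro g hg a
    have := hg.mul_coord hU hφ (a, ⟨0, by omega⟩)
    simpa [φ] using this
  have hv : ∀ g, GoodW volume φ U g → GoodW volume φ U (fun x => g x * vdm x) := by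
    unfold vdm
    refine GoodW.prod _ _ fun i _ => GoodW.prod _ _ fun j _ g hg => ?_
    simpa only [mul_sub] using (hl g hg j).add (hl g hg i)
  have hv2 : GoodW volume φ U (fun x => (vdm x) ^ 2) := by
    have := hv _ (hv _ h1)
    simpa only [one_mul, ← sq] using this
  have hs : ContDiffOn ℝ (⊤ : ℕ∞) (fun T => ∫ x, (vdm x) ^ 2 * Real.exp (ppair T (φ x))) U :=
    contDiffOn_infty.2 fun n => GoodW.contDiffOn_nat hU hφ n hv2
  have hE : ContDiff ℝ (⊤ : ℕ∞) (fun (t : Fin p → ℝ) (i : Fin N × Fin p) => t i.2) :=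
    contDiff_pi.2 fun i => contDiff_apply ℝ ℝ i.2
  have := hs.comp hE.contDiffOn (s := { t : Fin p → ℝ | t ⟨p - 1, by omega⟩ < 0 })
    (fun t ht a => ht)
  refine this.congr fun t _ => ?_
  simp only [Function.comp, ppair, φ, Fintype.sum_prod_type]

theorem vdm_shift {N : ℕ} (l : Fin N → ℝ) (s : ℝ) : vdm (l + fun _ => s) = vdm l := by
  simp [vdm]

/-- Shifted couplings. -/
noncomputable def tsh {p : ℕ} (t : Fin p → ℝ) (s : ℝ) : Fin p → ℝ := fun j =>
  ∑ k : Fin p, t k * ((((k : ℕ) + 1).choose ((j : ℕ) + 1) : ℝ) * s ^ ((k : ℕ) - (j : ℕ)))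

theorem tsh_zero {p : ℕ} (t : Fin p → ℝ) : tsh t 0 = t := by
  ext j
  unfold tsh
  rw [Finset.sum_eq_single j]
  · simp
  · intro k _ hk
    rcases lt_or_gt_of_ne (Fin.val_ne_of_ne hk) with h | h
    · rw [Nat.choose_eq_zero_of_lt (by omega)]; simp
    · rw [zero_pow (by omega)]; simp
  · simp

theorem pow_shift {p : ℕ} (k : Fin p) (x s : ℝ) : (x + s) ^ ((k : ℕ) + 1) =
    s ^ ((k : ℕ) + 1) + ∑ j : Fin p,
      ((((k : ℕ) + 1).choose ((j : ℕ) + 1) : ℝ) * s ^ ((k : ℕ) - (j : ℕ))) * x ^ ((j : ℕ) + 1) := by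
  rw [add_pow, Finset.sum_range_succ', add_comm]
  congr 1
  · simp
  rw [Fin.sum_univ_eq_sum_range (fun j => ((((k : ℕ) + 1).choose (j + 1) : ℝ) *
    s ^ ((k : ℕ) - j)) * x ^ (j + 1)) p]
  have hs : Finset.range ((k : ℕ) + 1) ⊆ Finset.range p := by
    intro a; simp only [Finset.mem_range]; omega
  rw [← Finset.sum_subset hs]
  · refine Finset.sum_congr rfl fun j _ => ?_
    rw [Nat.add_sub_add_right]; ring
  · intro j _ hj
    simp only [Finset.mem_range, not_lt] at hj
    rw [Nat.choose_eq_zero_of_lt (by omega)]; simp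

theorem pot_shift {p : ℕ} (t : Fin p → ℝ) (x s : ℝ) :
    ∑ k : Fin p, t k * (x + s) ^ ((k : ℕ) + 1) =
      (∑ k : Fin p, t k * s ^ ((k : ℕ) + 1)) + ∑ k : Fin p, tsh t s k * x ^ ((k : ℕ) + 1) := by
  simp only [pow_shift, mul_add, Finset.sum_add_distrib, tsh, Finset.sum_mul, Finset.mul_sum]
  congr 1
  rw [Finset.sum_comm]
  exact Finset.sum_congr rfl fun _ _ => Finset.sum_congr rfl fun _ _ => by ring

theorem tsh_deriv {p : ℕ} (t : Fin p → ℝ) : HasDerivAt (tsh t)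
    (∑ i ∈ Finset.univ.filter (fun i : Fin p => (i : ℕ) ≠ 0),
      (((i : ℕ) + 1 : ℝ) * t i) •
        (Pi.single ⟨(i : ℕ) - 1, lt_of_le_of_lt (Nat.sub_le _ _) i.isLt⟩ 1 : Fin p → ℝ)) 0 := by
  rw [hasDerivAt_pi]
  intro j
  have h : HasDerivAt (fun s : ℝ => tsh t s j) (∑ k : Fin p, t k *
    ((((k : ℕ) + 1).choose ((j : ℕ) + 1) : ℝ) *
      ((((k : ℕ) - (j : ℕ) : ℕ) : ℝ) * (0:ℝ) ^ ((k : ℕ) - (j : ℕ) - 1)))) 0 :=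
    HasDerivAt.fun_sum fun k _ => ((hasDerivAt_pow _ _).const_mul _).const_mul _
  refine h.congr_deriv (Eq.symm ?_)
  rw [Finset.sum_apply, Finset.sum_filter]
  refine Finset.sum_congr rfl fun k _ => ?_
  simp only [Pi.smul_apply, smul_eq_mul, Pi.single_apply, Fin.ext_iff]
  rcases lt_trichotomy (k : ℕ) ((j : ℕ) + 1) with h | h | h
  · rw [Nat.sub_eq_zero_of_le (by omega : (k : ℕ) ≤ j)]
    split_ifs with h1 h2
    · omega
    · simp
    · simp
  · rw [h, if_pos (by omega), if_pos (by omega), Nat.choose_succ_self_right]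
    simp
    ring
  · rw [if_pos (by omega), if_neg (by omega), zero_pow (by omega)]
    simp

theorem stmt15 (N p : ℕ) (hN : 1 ≤ N) (hp : 2 ≤ p) (hpe : Even p)
    (Z : (Fin p → ℝ) → ℝ)
    (hZ : ∀ t, Z t = (1 / (N.factorial : ℝ)) *
      ∫ lam : Fin N → ℝ, (vdm lam) ^ 2 *
        Real.exp (∑ a : Fin N, ∑ k : Fin p, t k * lam a ^ ((k : ℕ) + 1))) :
    ContDiffOn ℝ (⊤ : ℕ∞) Z { t : Fin p → ℝ | t ⟨p - 1, by omega⟩ < 0 } ∧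
    ∀ t : Fin p → ℝ, t ⟨p - 1, by omega⟩ < 0 →
      (∑ i ∈ Finset.univ.filter (fun i : Fin p => (i : ℕ) ≠ 0),
          ((i : ℕ) + 1 : ℝ) * t i *
            fderiv ℝ Z t
              (Pi.single ⟨(i : ℕ) - 1, lt_of_le_of_lt (Nat.sub_le _ _) i.isLt⟩ 1)) +
        (N : ℝ) * t ⟨0, by omega⟩ * Z t = 0 := by
  have hsm : ContDiffOn ℝ (⊤ : ℕ∞) Z { t : Fin p → ℝ | t ⟨p - 1, by omega⟩ < 0 } := by
    refine (contDiffOn_const (c := 1 / (N.factorial : ℝ)) |>.mul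
      (smooth_part N p hp hpe)).congr fun t _ => hZ t
  refine ⟨hsm, fun t ht => ?_⟩
  have hopen : IsOpen { t : Fin p → ℝ | t ⟨p - 1, by omega⟩ < 0 } :=
    isOpen_lt (continuous_apply _) continuous_const
  have hd : DifferentiableAt ℝ Z t :=
    (hsm.differentiableOn (by simp)).differentiableAt (hopen.mem_nhds ht)
  -- translation invariance
  have hinv : ∀ s : ℝ, Z t =
      Real.exp ((N : ℝ) * ∑ k : Fin p, t k * s ^ ((k : ℕ) + 1)) * Z (tsh t s) := by
    intro s
    rw [hZ t, hZ (tsh t s), ← integral_add_right_eq_self (fun lam : Fin N → ℝ => (vdm lam) ^ 2 *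
        Real.exp (∑ a : Fin N, ∑ k : Fin p, t k * lam a ^ ((k : ℕ) + 1))) (fun _ : Fin N => s),
      mul_left_comm, ← integral_const_mul (Real.exp _)]
    congr 1
    refine integral_congr_ae (Filter.Eventually.of_forall fun x => ?_)
    simp only [vdm_shift, Pi.add_apply, pot_shift, Finset.sum_add_distrib, Finset.sum_const,
      Finset.card_univ, Fintype.card_fin, nsmul_eq_mul, Real.exp_add]
    ring
  have h0 := tsh_deriv t
  have hd' : HasFDerivAt Z (fderiv ℝ Z t) (tsh t 0) := by
    rw [tsh_zero]; exact hd.hasFDerivAt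
  have h1 : HasDerivAt (fun s => Z (tsh t s)) _ 0 := hd'.comp_hasDerivAt (0:ℝ) h0
  have h2 : HasDerivAt (fun s : ℝ => (N : ℝ) * ∑ k : Fin p, t k * s ^ ((k : ℕ) + 1))
      ((N : ℝ) * t ⟨0, by omega⟩) 0 := by
    have h : HasDerivAt (fun s : ℝ => (N : ℝ) * ∑ k : Fin p, t k * s ^ ((k : ℕ) + 1))
      ((N : ℝ) * ∑ k : Fin p, t k * ((((k : ℕ) + 1 : ℕ) : ℝ) * (0:ℝ) ^ ((k : ℕ) + 1 - 1))) 0 :=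
      (HasDerivAt.fun_sum fun k _ => (hasDerivAt_pow _ _).const_mul _).const_mul _
    convert h using 2
    rw [Finset.sum_eq_single (⟨0, by omega⟩ : Fin p)]
    · simp
    · intro k _ hk
      have : (k : ℕ) ≠ 0 := fun h => hk (Fin.ext h)
      rw [zero_pow (by omega)]; simp
    · simp
  have h3 := h2.exp.mul h1
  have h4 : HasDerivAt (fun _ : ℝ => Z t) 0 0 := hasDerivAt_const _ _
  have h5 := h3.unique (h4.congr_of_eventuallyEq
    (Filter.Eventually.of_forall fun s => (hinv s).symm))
  rw [tsh_zero] at h5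
  simp only [map_sum, map_smul, smul_eq_mul] at h5
  simp at h5
  simp
  linarith
end

section
/- Let N ≥ 1, let p ≥ 2 be even, and for t = (t_1,…,t_p) ∈ ℝ^p with t_p < 0 define Z_N(t) := (1/N!) ∫_{ℝ^N} Δ(λ_1,…,λ_N)² exp( Σ_{a=1}^N Σ_{k=1}^p t_k λ_a^k ) dλ, and for m ≥ 0 the power-sum insertion G_m(t) := (1/N!) ∫_{ℝ^N} ( Σ_{a=1}^N λ_a^m ) Δ(λ_1,…,λ_N)² exp( Σ_{a=1}^N Σ_{k=1}^p t_k λ_a^k ) dλ (so G_m = ∂Z_N/∂t_m for 1 ≤ m ≤ p). Then for every integer s with 1 ≤ s ≤ p and every t with t_p < 0, the Virasoro constraint L_s holds: Σ_{k=1}^p k t_k G_{k+s}(t) + 2N ∂Z_N/∂t_s (t) + Σ_{a=1}^{s−1} ∂²Z_N/∂t_a ∂t_{s−a} (t) = 0. -/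
open MeasureTheory

namespace Vir
open MvPolynomial

/-- One-variable bound on the potential. -/
lemma bound1 (q : ℕ) (hq : 1 ≤ q) (he : Even (q + 1)) (K c : ℝ) (hK : 0 ≤ K) (hc : 0 < c) :
    ∃ C : ℝ, ∀ t : Fin (q + 1) → ℝ, (∀ k, |t k| ≤ K) → t (Fin.last q) ≤ -c →
      ∀ x : ℝ, ∑ k : Fin (q + 1), t k * x ^ ((k : ℕ) + 1) ≤ C - c / 2 * x ^ 2 := by
  set R : ℝ := max 1 (2 * q * K / c) with hR
  have hR1 : 1 ≤ R := le_max_left _ _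
  have hR2 : 2 * q * K / c ≤ R := le_max_right _ _
  refine ⟨q * (K * R ^ q) + c / 2 * R ^ 2, fun t ht htl x => ?_⟩
  set r : ℝ := |x| with hr
  have hr0 : 0 ≤ r := abs_nonneg x
  have hx2 : x ^ 2 = r ^ 2 := (sq_abs x).symm
  have hxq : x ^ (q + 1) = r ^ (q + 1) := (he.pow_abs x).symm
  rw [Fin.sum_univ_castSucc]
  have h1 : ∀ M : ℝ, (∀ k : Fin q, r ^ ((k : ℕ) + 1) ≤ M) →
      ∑ k : Fin q, t k.castSucc * x ^ (((k.castSucc : Fin (q + 1)) : ℕ) + 1) ≤ q * (K * M) := by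
    intro M hM
    have : ∑ k : Fin q, t k.castSucc * x ^ (((k.castSucc : Fin (q + 1)) : ℕ) + 1)
        ≤ ∑ _k : Fin q, K * M := by
      refine Finset.sum_le_sum fun k _ => ?_
      refine (le_abs_self _).trans ?_
      rw [abs_mul, abs_pow]
      exact mul_le_mul (ht _) (by simpa using hM k) (by positivity) hK
    simpa using this
  have h2 : t (Fin.last q) * x ^ (((Fin.last q : Fin (q + 1)) : ℕ) + 1) ≤ -c * r ^ (q + 1) := by
    rw [Fin.val_last, hxq]
    exact mul_le_mul_of_nonneg_right htl (by positivity)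
  rw [hx2]
  rcases le_total r R with h | h
  · have h3 := h1 (R ^ q) fun k =>
      (pow_le_pow_left₀ hr0 h _).trans (pow_le_pow_right₀ hR1 (by omega))
    have h4 : r ^ 2 ≤ R ^ 2 := pow_le_pow_left₀ hr0 h _
    have h5 : 0 ≤ c * r ^ (q + 1) := by positivity
    nlinarith
  · have hr1 : 1 ≤ r := hR1.trans h
    have h3 := h1 (r ^ q) fun k => pow_le_pow_right₀ hr1 (by omega)
    have h4 : r ^ 2 ≤ r ^ (q + 1) := pow_le_pow_right₀ hr1 (by omega)
    have h5 : 2 * q * K ≤ r * c := by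
      rw [← div_le_iff₀ hc]; exact hR2.trans h
    have h6 : 2 * q * K * r ^ q ≤ r * c * r ^ q := mul_le_mul_of_nonneg_right h5 (by positivity)
    have h7 : 0 ≤ q * (K * R ^ q) + c / 2 * R ^ 2 := by positivity
    have h8 : c * r ^ 2 ≤ c * r ^ (q + 1) := mul_le_mul_of_nonneg_left h4 hc.le
    have h9 : r ^ (q + 1) = r * r ^ q := by ring
    rw [h9] at h2 h8
    linarith

/-- The exponent. -/
noncomputable def S {N q : ℕ} (t : Fin (q + 1) → ℝ) (l : Fin N → ℝ) : ℝ :=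
  ∑ a : Fin N, ∑ k : Fin (q + 1), t k * l a ^ ((k : ℕ) + 1)

lemma S_cont {N q : ℕ} (t : Fin (q + 1) → ℝ) : Continuous (S t : (Fin N → ℝ) → ℝ) := by
  unfold S; fun_prop

lemma gauss_int {N : ℕ} (b : ℝ) (hb : 0 < b) (Q : MvPolynomial (Fin N) ℝ) :
    Integrable (fun l : Fin N → ℝ => eval l Q * ∏ a, Real.exp (-b * l a ^ 2)) := by
  induction Q using MvPolynomial.induction_on' with
  | monomial u r =>
    have h : Integrable (fun l : Fin N → ℝ => ∏ a, (l a ^ (u a) * Real.exp (-b * l a ^ 2))) := by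
      refine Integrable.fintype_prod (f := fun a x => x ^ (u a) * Real.exp (-b * x ^ 2)) fun a => ?_
      have := integrable_rpow_mul_exp_neg_mul_sq hb (s := (u a : ℝ))
        (by have : (0 : ℝ) ≤ u a := Nat.cast_nonneg _
            linarith)
      simpa [Real.rpow_natCast] using this
    refine (h.const_mul r).congr (Filter.Eventually.of_forall fun l => ?_)
    simp only [eval_monomial, Finset.prod_mul_distrib, Finsupp.prod_fintype, pow_zero, implies_true]
    ring
  | add p q hp hq =>
    refine (hp.add hq).congr (Filter.Eventually.of_forall fun l => ?_)
    simp [add_mul]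

lemma dom {N q : ℕ} (hq : 1 ≤ q) (he : Even (q + 1)) (t : Fin (q + 1) → ℝ)
    (ht : t (Fin.last q) < 0) :
    ∃ B b : ℝ, 0 < b ∧ ∀ᶠ t' in nhds t, ∀ l : Fin N → ℝ,
      Real.exp (S t' l) ≤ B * ∏ a, Real.exp (-b * l a ^ 2) := by
  obtain ⟨C, hC⟩ := bound1 q hq he (‖t‖ + 1) (-t (Fin.last q) / 2) (by positivity) (by linarith)
  refine ⟨Real.exp (N * C), -t (Fin.last q) / 2 / 2, by linarith, ?_⟩
  have e1 : ∀ᶠ t' in nhds t, ‖t'‖ < ‖t‖ + 1 :=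
    (continuous_norm.tendsto t).eventually (gt_mem_nhds (by linarith))
  have e2 : ∀ᶠ t' in nhds t, t' (Fin.last q) < t (Fin.last q) / 2 :=
    ((continuous_apply (Fin.last q)).tendsto t).eventually (gt_mem_nhds (by linarith))
  filter_upwards [e1, e2] with t' h1 h2 l
  rw [← Real.exp_sum, ← Real.exp_add]
  apply Real.exp_le_exp.2
  have : S t' l ≤ ∑ a : Fin N, (C - -t (Fin.last q) / 2 / 2 * l a ^ 2) :=
    Finset.sum_le_sum fun a _ => hC t' (fun k => (norm_le_pi_norm t' k).trans h1.le)
      (by linarith) (l a)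
  refine this.trans (le_of_eq ?_)
  simp [Finset.sum_sub_distrib, Finset.sum_neg_distrib, sub_eq_add_neg, Finset.sum_add_distrib]

lemma int_Q {N q : ℕ} (hq : 1 ≤ q) (he : Even (q + 1)) (t : Fin (q + 1) → ℝ)
    (ht : t (Fin.last q) < 0) (Q : MvPolynomial (Fin N) ℝ) :
    Integrable (fun l : Fin N → ℝ => eval l Q * Real.exp (S t l)) := by
  obtain ⟨B, b, hb, h⟩ := dom (N := N) hq he t ht
  have h := h.self_of_nhds
  refine ((gauss_int b hb Q).norm.const_mul B).mono' ?_ (Filter.Eventually.of_forall fun l => ?_)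
  · exact (Continuous.mul (MvPolynomial.continuous_eval Q) (Real.continuous_exp.comp (S_cont t))).aestronglyMeasurable
  · rw [norm_mul, norm_mul, Real.norm_of_nonneg (Real.exp_pos _).le,
      Real.norm_of_nonneg (Finset.prod_nonneg fun a _ => (Real.exp_pos _).le)]
    calc _ ≤ ‖eval l Q‖ * (B * ∏ a, Real.exp (-b * l a ^ 2)) :=
          mul_le_mul_of_nonneg_left (h l) (norm_nonneg _)
      _ = _ := by ring

noncomputable def J {N q : ℕ} (t : Fin (q + 1) → ℝ) (Q : MvPolynomial (Fin N) ℝ) : ℝ :=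
  ∫ l : Fin N → ℝ, eval l Q * Real.exp (S t l)

lemma J_add {N q : ℕ} (hq : 1 ≤ q) (he : Even (q + 1)) (t : Fin (q + 1) → ℝ)
    (ht : t (Fin.last q) < 0) (P Q : MvPolynomial (Fin N) ℝ) : J t (P + Q) = J t P + J t Q := by
  unfold J
  rw [← integral_add (int_Q hq he t ht P) (int_Q hq he t ht Q)]
  simp [add_mul]

lemma J_C {N q : ℕ} (t : Fin (q + 1) → ℝ)
    (c : ℝ) (Q : MvPolynomial (Fin N) ℝ) : J t (C c * Q) = c * J t Q := by
  unfold J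
  rw [← integral_const_mul]
  simp [mul_assoc]

lemma J_zero {N q : ℕ} (t : Fin (q + 1) → ℝ) : J t (0 : MvPolynomial (Fin N) ℝ) = 0 := by
  simp [J]

lemma J_sum {N q : ℕ} (hq : 1 ≤ q) (he : Even (q + 1)) (t : Fin (q + 1) → ℝ)
    (ht : t (Fin.last q) < 0) {ι : Type*} (s : Finset ι) (P : ι → MvPolynomial (Fin N) ℝ) :
    J t (∑ i ∈ s, P i) = ∑ i ∈ s, J t (P i) := by
  classical
  induction s using Finset.induction_on with
  | empty => simp [J_zero]
  | insert a s ha ih => rw [Finset.sum_insert ha, Finset.sum_insert ha, J_add hq he t ht, ih]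

lemma hasFDerivAt_S {N q : ℕ} (t : Fin (q + 1) → ℝ) (l : Fin N → ℝ) :
    HasFDerivAt (fun t => S t l) (∑ k : Fin (q + 1), (∑ a, l a ^ ((k : ℕ) + 1)) •
      (ContinuousLinearMap.proj k : (Fin (q + 1) → ℝ) →L[ℝ] ℝ)) t := by
  have h : (fun t : Fin (q + 1) → ℝ => S t l) = (∑ k : Fin (q + 1), (∑ a, l a ^ ((k : ℕ) + 1)) •
      (ContinuousLinearMap.proj k : (Fin (q + 1) → ℝ) →L[ℝ] ℝ)) := by
    ext t
    simp only [S, ContinuousLinearMap.sum_apply, ContinuousLinearMap.smul_apply,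
      ContinuousLinearMap.proj_apply, smul_eq_mul]
    rw [Finset.sum_comm]
    simp [Finset.mul_sum, mul_comm]
  rw [h]
  exact ContinuousLinearMap.hasFDerivAt _

lemma deriv_J {N q : ℕ} (hq : 1 ≤ q) (he : Even (q + 1)) (t : Fin (q + 1) → ℝ)
    (ht : t (Fin.last q) < 0) (Q : MvPolynomial (Fin N) ℝ) (i : Fin (q + 1)) (c : ℝ) :
    fderiv ℝ (fun t => c * J t Q) t (Pi.single i 1) =
      c * J t (psum (Fin N) ℝ ((i : ℕ) + 1) * Q) := by
  obtain ⟨B, b, hb, h⟩ := dom (N := N) hq he t ht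
  set L : (Fin N → ℝ) → (Fin (q + 1) → ℝ) →L[ℝ] ℝ := fun l =>
    ∑ k : Fin (q + 1), (∑ a, l a ^ ((k : ℕ) + 1)) •
      (ContinuousLinearMap.proj k : (Fin (q + 1) → ℝ) →L[ℝ] ℝ) with hL
  set F' : (Fin (q + 1) → ℝ) → (Fin N → ℝ) → (Fin (q + 1) → ℝ) →L[ℝ] ℝ := fun t l =>
    (eval l Q * Real.exp (S t l)) • L l with hF'
  set bd : (Fin N → ℝ) → ℝ := fun l => ∑ k : Fin (q + 1),
    B * ‖eval l (psum (Fin N) ℝ ((k : ℕ) + 1) * Q) * ∏ a, Real.exp (-b * l a ^ 2)‖ with hbd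
  have hbdi : Integrable bd :=
    integrable_finsetSum _ fun k _ => (gauss_int b hb _).norm.const_mul B
  have hLn : ∀ l, ‖L l‖ ≤ ∑ k : Fin (q + 1), ‖eval l (psum (Fin N) ℝ ((k : ℕ) + 1))‖ := by
    intro l
    refine (norm_sum_le _ _).trans (Finset.sum_le_sum fun k _ => ?_)
    rw [norm_smul]
    have h1 : ‖(ContinuousLinearMap.proj k : (Fin (q + 1) → ℝ) →L[ℝ] ℝ)‖ ≤ 1 :=
      ContinuousLinearMap.opNorm_le_bound _ zero_le_one fun x => by
        simpa using norm_le_pi_norm x k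
    calc _ ≤ ‖∑ a, l a ^ ((k : ℕ) + 1)‖ * 1 := mul_le_mul_of_nonneg_left h1 (norm_nonneg _)
      _ = _ := by simp [psum]
  have hbound : ∀ t' , (∀ l : Fin N → ℝ,
      Real.exp (S t' l) ≤ B * ∏ a, Real.exp (-b * l a ^ 2)) → ∀ l, ‖F' t' l‖ ≤ bd l := by
    intro t' ht' l
    have h0 : 0 ≤ B * ∏ a, Real.exp (-b * l a ^ 2) := (Real.exp_pos _).le.trans (ht' l)
    rw [hF', norm_smul, norm_mul, Real.norm_of_nonneg (Real.exp_pos _).le]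
    calc _ ≤ (‖eval l Q‖ * (B * ∏ a, Real.exp (-b * l a ^ 2))) *
          ∑ k : Fin (q + 1), ‖eval l (psum (Fin N) ℝ ((k : ℕ) + 1))‖ :=
          mul_le_mul (mul_le_mul_of_nonneg_left (ht' l) (norm_nonneg _)) (hLn l)
            (norm_nonneg _) (mul_nonneg (norm_nonneg _) h0)
      _ = _ := by
        rw [hbd, Finset.mul_sum]
        refine Finset.sum_congr rfl fun k _ => ?_
        rw [norm_mul, map_mul, norm_mul,
          Real.norm_of_nonneg (Finset.prod_nonneg fun a _ => (Real.exp_pos _).le)]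
        ring
  have hLc : Continuous L := by
    rw [hL]; fun_prop
  have hF'm : AEStronglyMeasurable (F' t) volume :=
    (Continuous.smul (Continuous.mul (MvPolynomial.continuous_eval Q) (Real.continuous_exp.comp (S_cont t)))
      hLc).aestronglyMeasurable
  have hF'i : Integrable (F' t) :=
    hbdi.mono' hF'm (Filter.Eventually.of_forall (hbound t h.self_of_nhds))
  have key : HasFDerivAt (fun t => ∫ l : Fin N → ℝ, eval l Q * Real.exp (S t l))
      (∫ l, F' t l) t := by
    refine hasFDerivAt_integral_of_dominated_of_fderiv_le (bound := bd) h ?_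
      (int_Q hq he t ht Q) hF'm ?_ hbdi ?_
    · exact Filter.Eventually.of_forall fun t' =>
        (Continuous.mul (MvPolynomial.continuous_eval Q)
          (Real.continuous_exp.comp (S_cont t'))).aestronglyMeasurable
    · exact Filter.Eventually.of_forall fun l t' ht' => hbound t' ht' l
    · refine Filter.Eventually.of_forall fun l t' _ => ?_
      have := ((hasFDerivAt_S t' l).exp).const_mul (eval l Q)
      rw [smul_smul] at this
      exact this
  have key2 := key.const_mul c
  have : (fun t : Fin (q + 1) → ℝ => c * J t Q) = fun t => c * ∫ l : Fin N → ℝ, eval l Q * Real.exp (S t l) := rfl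
  rw [this, key2.fderiv, ContinuousLinearMap.smul_apply, ContinuousLinearMap.integral_apply hF'i,
    smul_eq_mul, J]
  congr 1
  refine integral_congr_ae (Filter.Eventually.of_forall fun l => ?_)
  simp only [hF', hL, ContinuousLinearMap.smul_apply, ContinuousLinearMap.sum_apply,
    ContinuousLinearMap.proj_apply, smul_eq_mul, map_mul, psum, map_sum, map_pow, eval_X]
  rw [Finset.sum_eq_single i]
  · simp; ring
  · intro k _ hk; simp [hk]
  · simp

lemma hasLineDerivAt_eval {N : ℕ} (Q : MvPolynomial (Fin N) ℝ) (l : Fin N → ℝ) (a : Fin N) :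
    HasLineDerivAt ℝ (fun l => eval l Q) (eval l (pderiv a Q)) l (Pi.single a 1) := by
  unfold HasLineDerivAt
  induction Q using MvPolynomial.induction_on with
  | C r => simpa using hasDerivAt_const (0 : ℝ) r
  | add p q hp hq =>
    simp only [map_add]
    exact hp.add hq
  | mul_X p n hp =>
    have hX : HasDerivAt (fun t : ℝ => (l + t • Pi.single a (1 : ℝ) : Fin N → ℝ) n)
        ((Pi.single a (1 : ℝ) : Fin N → ℝ) n) 0 := by
      have := ((hasDerivAt_id (0 : ℝ)).mul_const ((Pi.single a (1 : ℝ) : Fin N → ℝ) n)).const_add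
        (l n)
      simpa using this
    have := hp.mul hX
    simp only [map_mul, eval_X, Derivation.leibniz, pderiv_X, smul_eq_mul, map_add]
    refine this.congr_deriv ?_
    by_cases h : n = a
    · subst h; simp; ring
    · simp [h, Pi.single_apply, Ne.symm h]; ring

/-- The exponent as a polynomial. -/
noncomputable def SP (N : ℕ) {q : ℕ} (t : Fin (q + 1) → ℝ) : MvPolynomial (Fin N) ℝ :=
  ∑ a : Fin N, ∑ k : Fin (q + 1), C (t k) * X a ^ ((k : ℕ) + 1)

lemma eval_SP {N q : ℕ} (t : Fin (q + 1) → ℝ) (l : Fin N → ℝ) : eval l (SP N t) = S t l := by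
  simp [SP, S]

lemma ibp {N q : ℕ} (hq : 1 ≤ q) (he : Even (q + 1)) (t : Fin (q + 1) → ℝ)
    (ht : t (Fin.last q) < 0) (Q : MvPolynomial (Fin N) ℝ) (a : Fin N) :
    J t (pderiv a Q) + J t (Q * pderiv a (SP N t)) = 0 := by
  have := integral_bilinear_hasLineDerivAt_right_eq_neg_left_of_integrable (μ := volume)
    (f := fun l => eval l Q) (f' := fun l => eval l (pderiv a Q))
    (g := fun l => Real.exp (S t l))
    (g' := fun l => eval l (pderiv a (SP N t)) * Real.exp (S t l))
    (v := (Pi.single a 1 : Fin N → ℝ)) (B := ContinuousLinearMap.mul ℝ ℝ)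
    (by simpa using int_Q hq he t ht (pderiv a Q))
    (by simpa [mul_assoc] using int_Q hq he t ht (Q * pderiv a (SP N t)))
    (by simpa using int_Q hq he t ht Q)
    (fun l _ => hasLineDerivAt_eval Q l a)
    (fun l _ => by
      have h := hasLineDerivAt_eval (SP N t) l a
      unfold HasLineDerivAt at h ⊢
      have h := h.exp
      simp only [eval_SP] at h
      simpa [mul_comm] using h)
  simp only [ContinuousLinearMap.mul_apply'] at this
  unfold J
  simp only [map_mul, mul_assoc]
  rw [this]; ring

/-- Vandermonde polynomial. -/
noncomputable def D (N : ℕ) : MvPolynomial (Fin N) ℝ :=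
  ∏ i : Fin N, ∏ j ∈ Finset.Ioi i, (X j - X i)

lemma eval_D {N : ℕ} (l : Fin N → ℝ) : eval l (D N) = vdm l := by
  simp [D, vdm, eval_prod]

lemma der_prod {A : Type*} [CommRing A] [Algebra ℝ A] (E : Derivation ℝ A A) {ι : Type*}
    (s : Finset ι) (f h : ι → A) (hf : ∀ i ∈ s, E (f i) = f i * h i) :
    E (∏ i ∈ s, f i) = (∏ i ∈ s, f i) * ∑ i ∈ s, h i := by
  classical
  induction s using Finset.induction_on with
  | empty => simp
  | insert a s ha ih =>
    rw [Finset.prod_insert ha, Finset.sum_insert ha, Derivation.leibniz,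
      ih fun i hi => hf i (Finset.mem_insert_of_mem hi), hf a (Finset.mem_insert_self _ _)]
    simp only [smul_eq_mul]
    ring

lemma E_apply {N : ℕ} (s : ℕ) (P : MvPolynomial (Fin N) ℝ) :
    mkDerivation ℝ (fun a : Fin N => (X a ^ (s + 1) : MvPolynomial (Fin N) ℝ)) P
      = ∑ a, X a ^ (s + 1) * pderiv a P := by
  induction P using MvPolynomial.induction_on with
  | C r => simp
  | add p q hp hq => simp [hp, hq, mul_add, Finset.sum_add_distrib]
  | mul_X p n hp =>
    simp only [Derivation.leibniz, hp, mkDerivation_X, pderiv_X, smul_eq_mul, mul_add,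
      Finset.sum_add_distrib, Finset.mul_sum]
    congr 1
    · rw [Finset.sum_eq_single n]
      · simp; ring
      · intro k _ hk; simp [Pi.single_apply, hk, Ne.symm hk]
      · simp
    · exact Finset.sum_congr rfl fun _ _ => by ring

noncomputable def hh {N : ℕ} (s : ℕ) (i j : Fin N) : MvPolynomial (Fin N) ℝ :=
  ∑ c ∈ Finset.range (s + 1), X j ^ c * X i ^ (s - c)

lemma hh_symm {N : ℕ} (s : ℕ) (i j : Fin N) : hh s i j = hh s j i := by
  unfold hh
  rw [← Finset.sum_range_reflect]
  refine Finset.sum_congr rfl fun c hc => ?_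
  have := Finset.mem_range.1 hc
  rw [show s + 1 - 1 - c = s - c by omega, show s - (s - c) = c by omega, mul_comm]

lemma E_D {N : ℕ} (s : ℕ) :
    ∑ a, X a ^ (s + 1) * pderiv a (D N) = D N * ∑ i, ∑ j ∈ Finset.Ioi i, hh s i j := by
  rw [← E_apply]
  refine der_prod _ _ _ _ fun i _ => der_prod _ _ _ _ fun j _ => ?_
  rw [map_sub, mkDerivation_X, mkDerivation_X]
  have := (Commute.all (X j : MvPolynomial (Fin N) ℝ) (X i)).mul_geom_sum₂ (s + 1)
  rw [← this]; rfl

lemma hh_sum {N : ℕ} (s : ℕ) : 2 * ∑ i : Fin N, ∑ j ∈ Finset.Ioi i, hh s i j +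
    C ((s : ℝ) + 1) * psum (Fin N) ℝ s =
    ∑ c ∈ Finset.range (s + 1), psum (Fin N) ℝ c * psum (Fin N) ℝ (s - c) := by
  have h1 : 2 * ∑ i : Fin N, ∑ j ∈ Finset.Ioi i, hh s i j =
      ∑ i : Fin N, ∑ j ∈ ({i}ᶜ : Finset (Fin N)), hh s i j := by
    have := Finset.sum_sum_Ioi_add_eq_sum_sum_off_diag (fun j i : Fin N => hh s i j)
    rw [← this]
    simp only [Finset.mul_sum]
    refine Finset.sum_congr rfl fun i _ => Finset.sum_congr rfl fun j _ => ?_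
    rw [hh_symm s j i]; ring
  have h2 : C ((s : ℝ) + 1) * psum (Fin N) ℝ s = ∑ i : Fin N, hh s i i := by
    simp only [psum, hh, Finset.mul_sum]
    refine Finset.sum_congr rfl fun i _ => ?_
    rw [Finset.sum_congr rfl (g := fun _ => X i ^ s)]
    · simp
    · intro c hc
      have := Finset.mem_range.1 hc
      rw [← pow_add, show c + (s - c) = s by omega]
  rw [h1, h2, ← Finset.sum_add_distrib]
  have h3 : ∀ i : Fin N, ∑ j ∈ ({i}ᶜ : Finset (Fin N)), hh s i j + hh s i i = ∑ j, hh s i j := by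
    intro i
    rw [add_comm, ← Finset.sum_singleton (fun j => hh s i j) i, Finset.sum_add_sum_compl]
  simp only [h3]
  simp only [hh, psum, Finset.sum_mul_sum]
  rw [Finset.sum_comm]
  rw [Finset.sum_congr rfl fun j _ => Finset.sum_comm]
  rw [Finset.sum_comm]

lemma poly1 {N : ℕ} (s : ℕ) : ∑ a, pderiv a (X a ^ (s + 1) * D N ^ 2) =
    ∑ c ∈ Finset.range (s + 1), psum (Fin N) ℝ c * psum (Fin N) ℝ (s - c) * D N ^ 2 := by
  have : ∀ a : Fin N, pderiv a (X a ^ (s + 1) * D N ^ 2) =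
      C ((s : ℝ) + 1) * D N ^ 2 * X a ^ s + 2 * D N * (X a ^ (s + 1) * pderiv a (D N)) := by
    intro a
    simp only [Derivation.leibniz, Derivation.leibniz_pow, pderiv_X_self, smul_eq_mul]
    simp
    ring
  rw [Finset.sum_congr rfl fun a _ => this a, Finset.sum_add_distrib, ← Finset.mul_sum,
    ← Finset.mul_sum, E_D, ← Finset.sum_mul, ← hh_sum]
  unfold psum
  ring

lemma poly2 {N q : ℕ} (s : ℕ) (t : Fin (q + 1) → ℝ) :
    ∑ a, X a ^ (s + 1) * D N ^ 2 * pderiv a (SP N t) =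
    ∑ k : Fin (q + 1), C (((k : ℕ) + 1 : ℝ) * t k) *
      (psum (Fin N) ℝ ((k : ℕ) + 1 + s) * D N ^ 2) := by
  have h : ∀ a : Fin N, pderiv a (SP N t) =
      ∑ k : Fin (q + 1), C (((k : ℕ) + 1 : ℝ) * t k) * X a ^ (k : ℕ) := by
    intro a
    unfold SP
    rw [map_sum, Finset.sum_eq_single a]
    · rw [map_sum]
      refine Finset.sum_congr rfl fun k _ => ?_
      simp only [Derivation.leibniz, Derivation.leibniz_pow, pderiv_X_self, smul_eq_mul, pderiv_C]
      simp
      ring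
    · intro b _ hb
      rw [map_sum]
      refine Finset.sum_eq_zero fun k _ => ?_
      simp [Derivation.leibniz, Derivation.leibniz_pow, pderiv_X, Pi.single_apply, hb, Ne.symm hb]
    · simp
  simp only [h, Finset.mul_sum, psum, Finset.sum_mul]
  rw [Finset.sum_comm]
  refine Finset.sum_congr rfl fun k _ => Finset.sum_congr rfl fun a _ => ?_
  ring

lemma virasoro {N q : ℕ} (hq : 1 ≤ q) (he : Even (q + 1)) (t : Fin (q + 1) → ℝ)
    (ht : t (Fin.last q) < 0) (s : ℕ) (hs : 1 ≤ s) :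
    ∑ k : Fin (q + 1), (((k : ℕ) + 1 : ℝ) * t k) * J t (psum (Fin N) ℝ ((k : ℕ) + 1 + s) * D N ^ 2)
    + 2 * (N : ℝ) * J t (psum (Fin N) ℝ s * D N ^ 2)
    + ∑ a ∈ Finset.Ioo 0 s, J t (psum (Fin N) ℝ (s - a) * (psum (Fin N) ℝ a * D N ^ 2)) = 0 := by
  have h0 : ∑ a : Fin N, (J t (pderiv a (X a ^ (s + 1) * D N ^ 2)) +
      J t (X a ^ (s + 1) * D N ^ 2 * pderiv a (SP N t))) = 0 :=
    Finset.sum_eq_zero fun a _ => ibp hq he t ht _ a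
  rw [Finset.sum_add_distrib, ← J_sum hq he t ht, ← J_sum hq he t ht, poly1, poly2,
    J_sum hq he t ht, J_sum hq he t ht] at h0
  simp only [J_C] at h0
  rw [← h0]
  obtain ⟨r, rfl⟩ : ∃ r, s = r + 1 := ⟨s - 1, by omega⟩
  have hI : Finset.Ioo 0 (r + 1) = (Finset.range r).image (· + 1) := by
    ext x
    simp only [Finset.mem_Ioo, Finset.mem_image, Finset.mem_range]
    constructor
    · intro h; exact ⟨x - 1, by omega, by omega⟩
    · rintro ⟨y, hy, rfl⟩; omega
  rw [hI, Finset.sum_image (by intro a _ b _ h; simpa using h), Finset.sum_range_succ,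
    Finset.sum_range_succ']
  have hz : ∀ P : MvPolynomial (Fin N) ℝ, J t (psum (Fin N) ℝ 0 * P) = N * J t P := by
    intro P
    rw [psum_zero, ← J_C]; simp
  have e1 : J t (psum (Fin N) ℝ 0 * psum (Fin N) ℝ (r + 1 - 0) * D N ^ 2) =
      N * J t (psum (Fin N) ℝ (r + 1) * D N ^ 2) := by
    rw [mul_assoc, hz, Nat.sub_zero]
  have e2 : J t (psum (Fin N) ℝ (r + 1) * psum (Fin N) ℝ (r + 1 - (r + 1)) * D N ^ 2) =
      N * J t (psum (Fin N) ℝ (r + 1) * D N ^ 2) := by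
    rw [Nat.sub_self, mul_comm (psum _ _ (r + 1)), mul_assoc, hz]
  have e3 : ∀ a, J t (psum (Fin N) ℝ (r + 1 - (a + 1)) * (psum (Fin N) ℝ (a + 1) * D N ^ 2)) =
      J t (psum (Fin N) ℝ (a + 1) * psum (Fin N) ℝ (r + 1 - (a + 1)) * D N ^ 2) := by
    intro a; congr 1; ring
  rw [e1, e2]
  simp only [e3]
  ring

end Vir

theorem stmt17 (N p : ℕ) (hN : 1 ≤ N) (hp : 2 ≤ p) (hpe : Even p)
    (Z : (Fin p → ℝ) → ℝ)
    (hZ : ∀ t, Z t = (1 / (N.factorial : ℝ)) *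
      ∫ lam : Fin N → ℝ, (vdm lam) ^ 2 *
        Real.exp (∑ a : Fin N, ∑ k : Fin p, t k * lam a ^ ((k : ℕ) + 1)))
    (G : ℕ → (Fin p → ℝ) → ℝ)
    (hG : ∀ m t, G m t = (1 / (N.factorial : ℝ)) *
      ∫ lam : Fin N → ℝ, (∑ a : Fin N, lam a ^ m) * (vdm lam) ^ 2 *
        Real.exp (∑ a : Fin N, ∑ k : Fin p, t k * lam a ^ ((k : ℕ) + 1))) :
    (∀ i : Fin p, ∀ t : Fin p → ℝ, t ⟨p - 1, by omega⟩ < 0 →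
      G ((i : ℕ) + 1) t = fderiv ℝ Z t (Pi.single i 1)) ∧
    ∀ s : ℕ, 1 ≤ s → s ≤ p → ∀ t : Fin p → ℝ, t ⟨p - 1, by omega⟩ < 0 →
      (∑ i : Fin p, ((i : ℕ) + 1 : ℝ) * t i * G ((i : ℕ) + 1 + s) t) +
        2 * (N : ℝ) * fderiv ℝ Z t
          (Pi.single ⟨min (s - 1) (p - 1), by omega⟩ 1) +
        (∑ a ∈ Finset.Ioo 0 s,
          fderiv ℝ
            (fun t' => fderiv ℝ Z t' (Pi.single ⟨min (a - 1) (p - 1), by omega⟩ 1)) t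
            (Pi.single ⟨min (s - a - 1) (p - 1), by omega⟩ 1)) = 0 := by
  obtain ⟨q, rfl⟩ : ∃ q, p = q + 1 := ⟨p - 1, by omega⟩
  have hq : 1 ≤ q := by omega
  set c : ℝ := 1 / (N.factorial : ℝ) with hc
  have hZ' : Z = fun t => c * Vir.J t (Vir.D N ^ 2) := by
    funext t
    rw [hZ]
    simp only [Vir.J, map_pow, Vir.eval_D, Vir.S]
  have hG' : ∀ m t, G m t = c * Vir.J t (MvPolynomial.psum (Fin N) ℝ m * Vir.D N ^ 2) := by
    intro m t
    rw [hG]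
    simp only [Vir.J, map_pow, map_mul, Vir.eval_D, Vir.S, MvPolynomial.psum, map_sum,
      MvPolynomial.eval_X]
  have hd : ∀ t : Fin (q + 1) → ℝ, t (Fin.last q) < 0 → ∀ i : Fin (q + 1),
      fderiv ℝ Z t (Pi.single i 1) =
        c * Vir.J t (MvPolynomial.psum (Fin N) ℝ ((i : ℕ) + 1) * Vir.D N ^ 2) := by
    intro t ht i
    rw [hZ']
    exact Vir.deriv_J hq hpe t ht _ i c
  refine ⟨fun i t ht => ?_, fun s hs hsp t ht => ?_⟩
  · rw [hG', hd t ht]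
  · have ht' : t (Fin.last q) < 0 := ht
    have hv := Vir.virasoro (N := N) hq hpe t ht' s hs
    have h2 : ∀ i j : Fin (q + 1),
        fderiv ℝ (fun t' => fderiv ℝ Z t' (Pi.single i 1)) t (Pi.single j 1) =
        c * Vir.J t (MvPolynomial.psum (Fin N) ℝ ((j : ℕ) + 1) *
          (MvPolynomial.psum (Fin N) ℝ ((i : ℕ) + 1) * Vir.D N ^ 2)) := by
      intro i j
      have ev : (fun t' => fderiv ℝ Z t' (Pi.single i 1)) =ᶠ[nhds t]
          fun t' => c * Vir.J t' (MvPolynomial.psum (Fin N) ℝ ((i : ℕ) + 1) * Vir.D N ^ 2) := by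
        have : ∀ᶠ t' in nhds t, t' (Fin.last q) < 0 :=
          ((continuous_apply (Fin.last q)).tendsto t).eventually (gt_mem_nhds ht')
        filter_upwards [this] with t' h
        exact hd t' h i
      rw [ev.fderiv_eq]
      exact Vir.deriv_J hq hpe t ht' _ j c
    rw [hd t ht', Finset.sum_congr rfl fun a _ => h2 _ _]
    simp only [hG']
    rw [show min (s - 1) (q + 1 - 1) + 1 = s by omega]
    rw [Finset.sum_congr (s₁ := Finset.Ioo 0 s) rfl (g := fun a =>
      c * Vir.J t (MvPolynomial.psum (Fin N) ℝ (s - a) *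
          (MvPolynomial.psum (Fin N) ℝ a * Vir.D N ^ 2)))]
    · rw [← Finset.mul_sum, ← mul_zero c, ← hv]
      simp only [mul_add, Finset.mul_sum]
      congr 1
      congr 1
      · exact Finset.sum_congr rfl fun k _ => by ring
      · ring
    · intro a ha
      have := Finset.mem_Ioo.1 ha
      rw [show min (s - a - 1) (q + 1 - 1) + 1 = s - a by omega,
        show min (a - 1) (q + 1 - 1) + 1 = a by omega]
end

section
/- Let N ≥ 1, let p ≥ 4 and q ≥ 4 be even, let g ∈ ℝ, and for t ∈ ℝ^p with t_p < 0 and t̃ ∈ ℝ^q with t̃_q < 0 define the two-matrix model partition function Z_N(t,t̃) := (1/N!) ∫_{ℝ^N}∫_{ℝ^N} Δ(λ_1,…,λ_N) Δ(μ_1,…,μ_N) ∏_{a=1}^N exp( Σ_{k=1}^p t_k λ_a^k + Σ_{s=1}^q t̃_s μ_a^s + g λ_a μ_a ) dλ dμ. Then Z_N is smooth on { t_p < 0, t̃_q < 0 } and satisfies the two-matrix string equation: Σ_{s=2}^q s t̃_s ∂Z_N/∂t̃_{s−1} + g ∂Z_N/∂t_1 + N t̃_1 Z_N = 0. -/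
open MeasureTheory

/-- polynomial growth -/
def PG {Y F : Type} [NormedAddCommGroup Y] [NormedAddCommGroup F] (f : Y → F) : Prop :=
  ∃ C : ℝ, ∃ m : ℕ, 0 ≤ C ∧ ∀ y, ‖f y‖ ≤ C * (1 + ‖y‖) ^ m

section PGsec
variable {Y F : Type} [NormedAddCommGroup Y] [NormedAddCommGroup F]

theorem PG.const (c : F) : PG (fun _ : Y => c) :=
  ⟨‖c‖, 0, norm_nonneg _, fun y => by simp⟩

theorem PG.add {f h : Y → F} (hf : PG f) (hh : PG h) : PG (fun y => f y + h y) := by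
  obtain ⟨C, m, hC, H⟩ := hf
  obtain ⟨D, n, hD, K⟩ := hh
  refine ⟨C + D, m + n, by positivity, fun y => ?_⟩
  have h1 : (1:ℝ) ≤ 1 + ‖y‖ := by linarith [norm_nonneg y]
  have e1 : (1 + ‖y‖) ^ m ≤ (1 + ‖y‖) ^ (m + n) := pow_le_pow_right₀ h1 (by omega)
  have e2 : (1 + ‖y‖) ^ n ≤ (1 + ‖y‖) ^ (m + n) := pow_le_pow_right₀ h1 (by omega)
  calc ‖f y + h y‖ ≤ ‖f y‖ + ‖h y‖ := norm_add_le _ _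
    _ ≤ C * (1 + ‖y‖) ^ m + D * (1 + ‖y‖) ^ n := add_le_add (H y) (K y)
    _ ≤ C * (1 + ‖y‖) ^ (m + n) + D * (1 + ‖y‖) ^ (m + n) := by gcongr
    _ = _ := by ring

theorem PG.of_mul {F1 F2 : Type} [NormedAddCommGroup F1] [NormedAddCommGroup F2]
    {f : Y → F1} {h : Y → F2} {k : Y → F} (hf : PG f) (hh : PG h)
    (hk : ∀ y, ‖k y‖ ≤ ‖f y‖ * ‖h y‖) : PG k := by
  obtain ⟨C, m, hC, H⟩ := hf
  obtain ⟨D, n, hD, K⟩ := hh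
  refine ⟨C * D, m + n, by positivity, fun y => ?_⟩
  calc ‖k y‖ ≤ ‖f y‖ * ‖h y‖ := hk y
    _ ≤ (C * (1 + ‖y‖) ^ m) * (D * (1 + ‖y‖) ^ n) :=
        mul_le_mul (H y) (K y) (norm_nonneg _) (by positivity)
    _ = _ := by ring

theorem PG.mul {f h : Y → ℝ} (hf : PG f) (hh : PG h) : PG (fun y => f y * h y) :=
  hf.of_mul hh fun _ => (norm_mul _ _).le

theorem PG.smul [NormedSpace ℝ F] {f : Y → ℝ} {h : Y → F} (hf : PG f) (hh : PG h) :
    PG (fun y => f y • h y) :=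
  hf.of_mul hh fun _ => (norm_smul _ _).le

theorem PG.pow {f : Y → ℝ} (hf : PG f) (n : ℕ) : PG (fun y => f y ^ n) := by
  induction n with
  | zero => simpa using PG.const (Y := Y) (1:ℝ)
  | succ k ih => simpa [pow_succ] using ih.mul hf

theorem PG.sum {ι : Type} (s : Finset ι) {f : ι → Y → F} (hf : ∀ i, PG (f i)) :
    PG (fun y => ∑ i ∈ s, f i y) := by
  classical
  induction s using Finset.induction_on with
  | empty => simpa using PG.const (Y := Y) (0:F)
  | insert a s ha ih => simpa [Finset.sum_insert ha] using (hf a).add ih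

theorem PG.prod {ι : Type} (s : Finset ι) {f : ι → Y → ℝ} (hf : ∀ i, PG (f i)) :
    PG (fun y => ∏ i ∈ s, f i y) := by
  classical
  induction s using Finset.induction_on with
  | empty => simpa using PG.const (Y := Y) (1:ℝ)
  | insert a s ha ih => simpa [Finset.prod_insert ha] using (hf a).mul ih

theorem PG.of_le {f : Y → F} (hf : ∀ y, ‖f y‖ ≤ ‖y‖) : PG f :=
  ⟨1, 1, zero_le_one, fun y => by have := hf y; simp; linarith⟩

theorem PG.integrable_bound [NormedSpace ℝ Y] [FiniteDimensional ℝ Y] [MeasurableSpace Y]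
    [BorelSpace Y] (ν : Measure Y) [ν.IsAddHaarMeasure]
    {f : Y → F} (hf : PG f) (C : ℝ) :
    ∃ B : Y → ℝ, Integrable B ν ∧ ∀ y, ∀ r : ℝ, r ≤ C - ‖y‖ → Real.exp r * ‖f y‖ ≤ B y := by
  obtain ⟨D, m, hD, H⟩ := hf
  let n := Module.finrank ℝ Y + 1
  refine ⟨fun y => (D * Real.exp (C + 1) * (m + n).factorial) * (1 + ‖y‖) ^ (-(n:ℝ)), ?_, ?_⟩
  · refine (integrable_one_add_norm ?_).const_mul _
    simp [n]
  · intro y r hr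
    have h1 : (0:ℝ) < 1 + ‖y‖ := by linarith [norm_nonneg y]
    have h2 := Real.pow_div_factorial_le_exp (1 + ‖y‖) h1.le (m + n)
    rw [div_le_iff₀ (by positivity)] at h2
    have h3 : Real.exp r ≤ Real.exp (C + 1) * (Real.exp (1 + ‖y‖))⁻¹ := by
      rw [← Real.exp_neg, ← Real.exp_add]
      exact Real.exp_le_exp.2 (by linarith)
    have h4 : (1 + ‖y‖) ^ (-(n:ℝ)) = ((1 + ‖y‖) ^ n)⁻¹ := by
      rw [Real.rpow_neg h1.le, Real.rpow_natCast]
    simp only [h4]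
    calc Real.exp r * ‖f y‖ ≤ (Real.exp (C + 1) * (Real.exp (1 + ‖y‖))⁻¹) * (D * (1 + ‖y‖) ^ m) :=
          mul_le_mul h3 (H y) (norm_nonneg _) (by positivity)
      _ = (D * Real.exp (C + 1)) * ((Real.exp (1 + ‖y‖))⁻¹ * (1 + ‖y‖) ^ m) := by ring
      _ ≤ (D * Real.exp (C + 1)) * ((m + n).factorial * ((1 + ‖y‖) ^ n)⁻¹) := by
          refine mul_le_mul_of_nonneg_left ?_ (by positivity)
          rw [inv_mul_le_iff₀ (Real.exp_pos _), ← mul_assoc, le_mul_inv_iff₀ (by positivity), ← pow_add]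
          exact h2
      _ = _ := by ring
end PGsec

section Smooth
variable {Y E : Type} [NormedAddCommGroup Y] [NormedSpace ℝ Y] [FiniteDimensional ℝ Y]
    [MeasurableSpace Y] [BorelSpace Y] (ν : Measure Y) [ν.IsAddHaarMeasure]
    [NormedAddCommGroup E] [NormedSpace ℝ E]

theorem laplace_integrable {F : Type} [NormedAddCommGroup F] [NormedSpace ℝ F]
    {φ : Y → E →L[ℝ] ℝ} (hφ : Continuous φ) {ψ : Y → ℝ}
    (hψ : Continuous ψ) {w : Y → F} (hw : Continuous w) (hw' : PG w) (x : E)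
    {C : ℝ} (hx : ∀ y, φ y x + ψ y ≤ C - ‖y‖) :
    Integrable (fun y => Real.exp (φ y x + ψ y) • w y) ν := by
  obtain ⟨B, hB, hb⟩ := hw'.integrable_bound ν C
  have : SecondCountableTopology Y := secondCountable_of_proper
  refine hB.mono' ?_ (Filter.Eventually.of_forall fun y => ?_)
  · apply Continuous.aestronglyMeasurable
    have : Continuous fun y => φ y x := hφ.clm_apply continuous_const
    fun_prop
  · rw [norm_smul, Real.norm_eq_abs, Real.abs_exp]
    exact hb y _ (hx y)

theorem laplace_hasFDerivAt {F : Type} [NormedAddCommGroup F] [NormedSpace ℝ F] [CompleteSpace F]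
    {φ : Y → E →L[ℝ] ℝ} (hφ : Continuous φ) (hφ' : PG φ) {ψ : Y → ℝ}
    (hψ : Continuous ψ) {w : Y → F} (hw : Continuous w) (hw' : PG w) (x₀ : E)
    {C ε : ℝ} (hε : 0 < ε) (hx : ∀ x ∈ Metric.ball x₀ ε, ∀ y, φ y x + ψ y ≤ C - ‖y‖) :
    HasFDerivAt (fun x => ∫ y, Real.exp (φ y x + ψ y) • w y ∂ν)
      (∫ y, Real.exp (φ y x₀ + ψ y) • (φ y).smulRight (w y) ∂ν) x₀ := by
  have hPG : PG (fun y => (φ y).smulRight (w y)) :=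
    hφ'.of_mul hw' fun y => (ContinuousLinearMap.norm_smulRight_apply _ _).le
  have hc : Continuous (fun y => (φ y).smulRight (w y)) := by
    exact (((ContinuousLinearMap.smulRightL ℝ E F).continuous.comp hφ).clm_apply hw)
  have : SecondCountableTopology Y := secondCountable_of_proper
  obtain ⟨B, hB, hb⟩ := hPG.integrable_bound ν C
  refine hasFDerivAt_integral_of_dominated_of_fderiv_le
    (F := fun x y => Real.exp (φ y x + ψ y) • w y)
    (F' := fun x y => Real.exp (φ y x + ψ y) • (φ y).smulRight (w y))
    (Metric.ball_mem_nhds x₀ hε)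
    ?_ ?_ ?_ (Filter.Eventually.of_forall fun y x hxx => ?_) hB
    (Filter.Eventually.of_forall fun y x hxx => ?_)
  · filter_upwards [Metric.ball_mem_nhds x₀ hε] with x hxx
    exact (laplace_integrable ν hφ hψ hw hw' x (hx x hxx)).aestronglyMeasurable
  · exact laplace_integrable ν hφ hψ hw hw' x₀ (hx x₀ (Metric.mem_ball_self hε))
  · exact (laplace_integrable ν hφ hψ hc hPG x₀ (hx x₀ (Metric.mem_ball_self hε))).aestronglyMeasurable
  · rw [norm_smul, Real.norm_eq_abs, Real.abs_exp]
    exact hb y _ (hx x hxx y)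
  · have h1 : HasFDerivAt (fun x => Real.exp (φ y x + ψ y))
        (Real.exp (φ y x + ψ y) • φ y) x :=
      ((φ y).hasFDerivAt.add_const _).exp
    have h2 := h1.smul_const (w y)
    convert h2 using 1
    ext v
    simp [mul_smul]

theorem laplace_contDiffOn {φ : Y → E →L[ℝ] ℝ} (hφ : Continuous φ) (hφ' : PG φ) {ψ : Y → ℝ}
    (hψ : Continuous ψ) {U : Set E} (hU : IsOpen U)
    (hx : ∀ x₀ ∈ U, ∃ ε > 0, ∃ C : ℝ, ∀ x ∈ Metric.ball x₀ ε, ∀ y, φ y x + ψ y ≤ C - ‖y‖)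
    (n : ℕ) : ∀ {F : Type} [NormedAddCommGroup F] [NormedSpace ℝ F] [CompleteSpace F]
      {w : Y → F} (_ : Continuous w) (_ : PG w),
      ContDiffOn ℝ n (fun x => ∫ y, Real.exp (φ y x + ψ y) • w y ∂ν) U := by
  induction n with
  | zero =>
    intro F _ _ _ w hw hw'
    simp only [Nat.cast_zero, contDiffOn_zero]
    intro x₀ h0
    obtain ⟨ε, hε, C, hC⟩ := hx x₀ h0
    exact (laplace_hasFDerivAt ν hφ hφ' hψ hw hw' x₀ hε hC).continuousAt.continuousWithinAt
  | succ n ih =>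
    intro F _ _ _ w hw hw'
    have hPG : PG (fun y => (φ y).smulRight (w y)) :=
      hφ'.of_mul hw' fun y => (ContinuousLinearMap.norm_smulRight_apply _ _).le
    have hc : Continuous (fun y => (φ y).smulRight (w y)) := by
      exact (((ContinuousLinearMap.smulRightL ℝ E F).continuous.comp hφ).clm_apply hw)
    have key : ∀ x₀ ∈ U, HasFDerivAt (fun x => ∫ y, Real.exp (φ y x + ψ y) • w y ∂ν)
      (∫ y, Real.exp (φ y x₀ + ψ y) • (φ y).smulRight (w y) ∂ν) x₀ := by
      intro x₀ h0
      obtain ⟨ε, hε, C, hC⟩ := hx x₀ h0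
      exact laplace_hasFDerivAt ν hφ hφ' hψ hw hw' x₀ hε hC
    push_cast
    rw [contDiffOn_succ_iff_fderiv_of_isOpen hU]
    refine ⟨fun x h0 => (key x h0).differentiableAt.differentiableWithinAt, by simp, ?_⟩
    exact (ih hc hPG).congr fun x h0 => (key x h0).fderiv
end Smooth

theorem pow_absorb (j p : ℕ) (hj : j < p) (η : ℝ) (hη : 0 < η) :
    ∃ C : ℝ, 0 ≤ C ∧ ∀ r : ℝ, 0 ≤ r → r ^ j ≤ η * r ^ p + C := by
  let R := max 1 (1 / η)
  refine ⟨R ^ j, by positivity, fun r hr => ?_⟩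
  rcases le_total r R with h | h
  · have : r ^ j ≤ R ^ j := by gcongr
    have : 0 ≤ η * r ^ p := by positivity
    linarith
  · have h1 : 1 ≤ r := (le_max_left _ _).trans h
    have h2 : 1 / η ≤ r := (le_max_right _ _).trans h
    have h3 : 1 ≤ η * r := by rwa [div_le_iff₀' hη] at h2
    have h4 : r ^ (j + 1) ≤ r ^ p := pow_le_pow_right₀ h1 hj
    have h5 : 0 ≤ R ^ j := by positivity
    calc r ^ j = 1 * r ^ j := by ring
      _ ≤ (η * r) * r ^ j := by gcongr
      _ = η * r ^ (j + 1) := by ring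
      _ ≤ η * r ^ p := by gcongr
      _ ≤ _ := by linarith

theorem poly_bound (p : ℕ) (hp : 4 ≤ p) (hpe : Even p) (δ M K : ℝ) (hδ : 0 < δ) (hM : 0 ≤ M)
    (hK : 0 ≤ K) :
    ∃ C : ℝ, ∀ t : Fin p → ℝ, t ⟨p - 1, by omega⟩ ≤ -δ → (∀ k, |t k| ≤ M) → ∀ x : ℝ,
      ∑ k : Fin p, t k * x ^ ((k : ℕ) + 1) ≤ C - K * x ^ 2 := by
  obtain ⟨n, rfl⟩ : ∃ n, p = n + 1 := ⟨p - 1, by omega⟩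
  let η := δ / ((n + 1) * (M + K + 1))
  have hη : 0 < η := by positivity
  have H : ∀ j : Fin n, ∃ C : ℝ, 0 ≤ C ∧ ∀ r : ℝ, 0 ≤ r → r ^ ((j:ℕ) + 1) ≤ η * r ^ (n + 1) + C :=
    fun j => pow_absorb _ _ (by omega) η hη
  choose c hc0 hc using H
  obtain ⟨d, hd0, hd⟩ := pow_absorb 2 (n + 1) (by omega) η hη
  refine ⟨M * ∑ j, c j + K * d, fun t ht htM x => ?_⟩
  rw [Fin.sum_univ_castSucc]
  have hxp : |x| ^ (n + 1) = x ^ (n + 1) := hpe.pow_abs x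
  have hP : 0 ≤ x ^ (n + 1) := hpe.pow_nonneg x
  have h1 : ∀ j : Fin n, t j.castSucc * x ^ ((j.castSucc : ℕ) + 1) ≤
      M * (η * x ^ (n + 1) + c j) := by
    intro j
    calc t j.castSucc * x ^ ((j.castSucc : ℕ) + 1) ≤ |t j.castSucc * x ^ ((j.castSucc : ℕ) + 1)| :=
          le_abs_self _
      _ = |t j.castSucc| * |x| ^ ((j : ℕ) + 1) := by rw [abs_mul, abs_pow]; rfl
      _ ≤ M * (η * |x| ^ (n + 1) + c j) :=
          mul_le_mul (htM _) (hc j _ (abs_nonneg x)) (by positivity) hM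
      _ = _ := by rw [hxp]
  have h2 := Finset.sum_le_sum fun j (_ : j ∈ Finset.univ) => h1 j
  have h3 := hd |x| (abs_nonneg x)
  rw [hxp, sq_abs] at h3
  have h4 : t (Fin.last n) * x ^ ((Fin.last n : ℕ) + 1) ≤ -δ * x ^ (n + 1) := by
    have : t (Fin.last n) ≤ -δ := ht
    simp only [Fin.val_last]
    gcongr
  rw [← Finset.mul_sum, Finset.sum_add_distrib] at h2
  simp only [Finset.sum_const, Finset.card_univ, Fintype.card_fin, nsmul_eq_mul] at h2
  have h5 : ((n:ℝ) + 1) * (M + K + 1) * η = δ := by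
    simp only [η]; field_simp
  have h6 : M * (n * (η * x ^ (n + 1))) + K * (η * x ^ (n + 1)) ≤ δ * x ^ (n + 1) := by
    rw [← h5]
    have : 0 ≤ η * x ^ (n + 1) := by positivity
    have : 0 ≤ (n:ℝ) * K * (η * x ^ (n + 1)) := by positivity
    have : 0 ≤ M * (η * x ^ (n + 1)) := by positivity
    have : 0 ≤ (n:ℝ) * (η * x ^ (n + 1)) := by positivity
    nlinarith
  have h7 := mul_le_mul_of_nonneg_left h3 hK
  nlinarith

theorem vdm_add {N : ℕ} (l : Fin N → ℝ) (c : ℝ) : vdm (l + fun _ => c) = vdm l := by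
  simp [vdm]

/-- shifted couplings -/
noncomputable def shT {q : ℕ} (tt : Fin q → ℝ) (e : ℝ) : Fin q → ℝ := fun r =>
  ∑ s : Fin q, tt s * (((s:ℕ) + 1).choose ((r:ℕ) + 1) : ℝ) * e ^ ((s:ℕ) - (r:ℕ))

theorem shift_poly {q : ℕ} (tt : Fin q → ℝ) (e m : ℝ) :
    ∑ s : Fin q, tt s * (m + e) ^ ((s:ℕ) + 1) =
      (∑ s : Fin q, shT tt e s * m ^ ((s:ℕ) + 1)) + ∑ s : Fin q, tt s * e ^ ((s:ℕ) + 1) := by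
  simp only [shT, Finset.sum_mul]
  rw [Finset.sum_comm, ← Finset.sum_add_distrib]
  refine Finset.sum_congr rfl fun s _ => ?_
  rw [add_pow]
  have h1 : ∑ j ∈ Finset.range ((s:ℕ) + 1 + 1), m ^ j * e ^ ((s:ℕ) + 1 - j) * (((s:ℕ) + 1).choose j : ℝ)
      = ∑ j ∈ Finset.range (q + 1), m ^ j * e ^ ((s:ℕ) + 1 - j) * (((s:ℕ) + 1).choose j : ℝ) := by
    apply Finset.sum_subset
    · intro j hj
      have := s.isLt
      simp only [Finset.mem_range] at *
      omega
    · intro j _ hj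
      simp only [Finset.mem_range, not_lt] at hj
      rw [Nat.choose_eq_zero_of_lt (by omega)]
      simp
  rw [h1, Finset.sum_range_succ', Finset.sum_range, mul_add, Finset.mul_sum]
  congr 1
  · refine Finset.sum_congr rfl fun r _ => ?_
    rw [Nat.add_sub_add_right]
    ring
  · simp

theorem shT_zero {q : ℕ} (tt : Fin q → ℝ) : shT tt 0 = tt := by
  ext r
  unfold shT
  rw [Finset.sum_eq_single r]
  · simp
  · intro s _ hs
    have hs' : (s:ℕ) ≠ r := fun h => hs (Fin.ext h)
    rcases lt_or_gt_of_ne hs' with h | h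
    · rw [Nat.choose_eq_zero_of_lt (by omega)]; simp
    · rw [zero_pow (by omega)]; simp
  · simp

theorem shT_deriv {q : ℕ} (tt : Fin q → ℝ) :
    HasDerivAt (shT tt) (∑ s ∈ Finset.univ.filter (fun s : Fin q => (s : ℕ) ≠ 0),
          (((s : ℕ) + 1 : ℝ) * tt s) •
              (Pi.single ⟨(s : ℕ) - 1, lt_of_le_of_lt (Nat.sub_le _ _) s.isLt⟩ 1 : Fin q → ℝ)) 0 := by
  rw [hasDerivAt_pi]
  intro r
  rw [Finset.sum_apply, Finset.sum_filter]
  unfold shT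
  refine HasDerivAt.fun_sum fun s _ => ?_
  have h := (hasDerivAt_pow ((s:ℕ) - (r:ℕ)) (0:ℝ)).const_mul
    (tt s * (((s:ℕ) + 1).choose ((r:ℕ) + 1) : ℝ))
  refine h.congr_deriv ?_
  simp only [Pi.smul_apply, Pi.single_apply, smul_eq_mul, Fin.ext_iff]
  rcases lt_trichotomy (s:ℕ) ((r:ℕ) + 1) with h1 | h1 | h1
  · have : (s:ℕ) - (r:ℕ) = 0 := by omega
    rw [this]
    split_ifs <;> first | omega | simp
  · have h2 : (s:ℕ) - (r:ℕ) = 1 := by omega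
    rw [h2, h1]
    simp
    ring
  · have h2 : (s:ℕ) - (r:ℕ) - 1 ≠ 0 := by omega
    rw [zero_pow h2]
    split_ifs <;> first | omega | simp

theorem shift_integral {N p q : ℕ} (hp : 0 < p) (g : ℝ) (t : Fin p → ℝ) (tt : Fin q → ℝ)
    (e : ℝ) :
    (∫ lam : Fin N → ℝ, ∫ mu : Fin N → ℝ,
          vdm lam * vdm mu *
            ∏ a : Fin N, Real.exp
              ((∑ k : Fin p, t k * lam a ^ ((k : ℕ) + 1)) +
               (∑ s : Fin q, tt s * mu a ^ ((s : ℕ) + 1)) + g * lam a * mu a)) =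
    Real.exp (N * ∑ s : Fin q, tt s * e ^ ((s:ℕ) + 1)) *
    (∫ lam : Fin N → ℝ, ∫ mu : Fin N → ℝ,
          vdm lam * vdm mu *
            ∏ a : Fin N, Real.exp
              ((∑ k : Fin p, (t + e • (g • Pi.single ⟨0, hp⟩ 1 : Fin p → ℝ)) k * lam a ^ ((k : ℕ) + 1)) +
               (∑ s : Fin q, shT tt e s * mu a ^ ((s : ℕ) + 1)) + g * lam a * mu a)) := by
  rw [← integral_const_mul]
  congr 1
  ext lam
  rw [← integral_const_mul, ← integral_add_right_eq_self _ (fun _ : Fin N => e)]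
  congr 1
  ext mu
  rw [vdm_add]
  have hl : ∀ a, ∑ k : Fin p, (t + e • (g • Pi.single ⟨0, hp⟩ 1 : Fin p → ℝ)) k * lam a ^ ((k : ℕ) + 1)
      = (∑ k : Fin p, t k * lam a ^ ((k : ℕ) + 1)) + e * g * lam a := by
    intro a
    simp only [Pi.add_apply, Pi.smul_apply, smul_eq_mul, add_mul, Finset.sum_add_distrib]
    congr 1
    rw [Finset.sum_eq_single ⟨0, hp⟩]
    · simp
    · intro b _ hb
      simp [hb]
    · simp
  have : Real.exp (N * ∑ s : Fin q, tt s * e ^ ((s:ℕ) + 1)) =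
      ∏ a : Fin N, Real.exp (∑ s : Fin q, tt s * e ^ ((s:ℕ) + 1)) := by
    simp [← Real.exp_nat_mul]
  rw [this, mul_left_comm, ← Finset.prod_mul_distrib]
  congr 1
  refine Finset.prod_congr rfl fun a _ => ?_
  rw [← Real.exp_add, hl]
  simp only [Pi.add_apply]
  rw [shift_poly]
  congr 1
  ring

/-- the linear functional of the couplings -/
noncomputable def phi (N p q : ℕ) (y : (Fin N → ℝ) × (Fin N → ℝ)) :
    ((Fin p → ℝ) × (Fin q → ℝ)) →L[ℝ] ℝ :=
  ∑ a : Fin N,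
    ((∑ k : Fin p, (y.1 a ^ ((k:ℕ) + 1)) •
        ((ContinuousLinearMap.proj k : (Fin p → ℝ) →L[ℝ] ℝ).comp
          (ContinuousLinearMap.fst ℝ (Fin p → ℝ) (Fin q → ℝ)))) +
      ∑ s : Fin q, (y.2 a ^ ((s:ℕ) + 1)) •
        ((ContinuousLinearMap.proj s : (Fin q → ℝ) →L[ℝ] ℝ).comp
          (ContinuousLinearMap.snd ℝ (Fin p → ℝ) (Fin q → ℝ))))

theorem phi_apply (N p q : ℕ) (y : (Fin N → ℝ) × (Fin N → ℝ)) (x : (Fin p → ℝ) × (Fin q → ℝ)) :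
    phi N p q y x = ∑ a : Fin N, ((∑ k : Fin p, x.1 k * y.1 a ^ ((k:ℕ) + 1)) +
      ∑ s : Fin q, x.2 s * y.2 a ^ ((s:ℕ) + 1)) := by
  simp [phi, mul_comm]

theorem phi_cont (N p q : ℕ) : Continuous (phi N p q) := by
  unfold phi
  fun_prop

theorem PG_fst {N : ℕ} (a : Fin N) : PG (fun y : (Fin N → ℝ) × (Fin N → ℝ) => y.1 a) :=
  PG.of_le fun y => (norm_le_pi_norm y.1 a).trans (norm_fst_le y)

theorem PG_snd {N : ℕ} (a : Fin N) : PG (fun y : (Fin N → ℝ) × (Fin N → ℝ) => y.2 a) :=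
  PG.of_le fun y => (norm_le_pi_norm y.2 a).trans (norm_snd_le y)

theorem phi_PG (N p q : ℕ) : PG (phi N p q) := by
  unfold phi
  refine PG.sum _ fun a => PG.add (PG.sum _ fun k => ?_) (PG.sum _ fun s => ?_)
  · exact ((PG_fst a).pow _).smul (PG.const _)
  · exact ((PG_snd a).pow _).smul (PG.const _)

/-- the weight -/
noncomputable def wt (N : ℕ) (y : (Fin N → ℝ) × (Fin N → ℝ)) : ℝ := vdm y.1 * vdm y.2

theorem wt_cont (N : ℕ) : Continuous (wt N) := by
  unfold wt vdm
  fun_prop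

theorem PG_sub {Y : Type} [NormedAddCommGroup Y] {f h : Y → ℝ} (hf : PG f) (hh : PG h) :
    PG (fun y => f y - h y) := by
  have := hf.add ((PG.const (-1:ℝ)).mul hh)
  simpa [sub_eq_add_neg] using this

theorem wt_PG (N : ℕ) : PG (wt N) := by
  unfold wt vdm
  refine PG.mul (PG.prod _ fun i => PG.prod _ fun j => ?_) (PG.prod _ fun i => PG.prod _ fun j => ?_)
  · exact PG_sub (PG_fst j) (PG_fst i)
  · exact PG_sub (PG_snd j) (PG_snd i)

theorem phi_bound (N p q : ℕ) (hp : 4 ≤ p) (hpe : Even p) (hq : 4 ≤ q) (hqe : Even q) (g : ℝ)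
    (x₀ : (Fin p → ℝ) × (Fin q → ℝ)) (h1 : x₀.1 ⟨p - 1, by omega⟩ < 0)
    (h2 : x₀.2 ⟨q - 1, by omega⟩ < 0) :
    ∃ ε > 0, ∃ C : ℝ, ∀ x ∈ Metric.ball x₀ ε, ∀ y : (Fin N → ℝ) × (Fin N → ℝ),
      phi N p q y x + (∑ a, g * y.1 a * y.2 a) ≤ C - ‖y‖ := by
  obtain ⟨ε, hε, e1, e2⟩ : ∃ ε : ℝ, 0 < ε ∧ x₀.1 ⟨p - 1, by omega⟩ + ε ≤ -ε ∧
      x₀.2 ⟨q - 1, by omega⟩ + ε ≤ -ε := by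
    refine ⟨min (-x₀.1 ⟨p - 1, by omega⟩ / 2) (-x₀.2 ⟨q - 1, by omega⟩ / 2), ?_, ?_, ?_⟩
    · apply lt_min <;> linarith
    · linarith [min_le_left (-x₀.1 ⟨p - 1, by omega⟩ / 2) (-x₀.2 ⟨q - 1, by omega⟩ / 2)]
    · linarith [min_le_right (-x₀.1 ⟨p - 1, by omega⟩ / 2) (-x₀.2 ⟨q - 1, by omega⟩ / 2)]
  obtain ⟨C1, hC1⟩ := poly_bound p hp hpe ε (‖x₀‖ + ε) (|g| / 2 + 1) hε (by positivity) (by positivity)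
  obtain ⟨C2, hC2⟩ := poly_bound q hq hqe ε (‖x₀‖ + ε) (|g| / 2 + 1) hε (by positivity) (by positivity)
  refine ⟨ε, hε, N * (C1 + C2) + 1, fun x hx y => ?_⟩
  rw [mem_ball_iff_norm] at hx
  have hxn : ‖x‖ ≤ ‖x₀‖ + ε := by
    have := norm_sub_norm_le x x₀
    linarith
  have d1 : ∀ k, |x.1 k - x₀.1 k| ≤ ε := fun k =>
    ((norm_le_pi_norm (x - x₀).1 k).trans (norm_fst_le _)).trans hx.le
  have d2 : ∀ k, |x.2 k - x₀.2 k| ≤ ε := fun k =>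
    ((norm_le_pi_norm (x - x₀).2 k).trans (norm_snd_le _)).trans hx.le
  have b1 := hC1 x.1 (by linarith [(abs_le.1 (d1 ⟨p - 1, by omega⟩)).2])
    (fun k => ((norm_le_pi_norm x.1 k).trans (norm_fst_le _)).trans hxn)
  have b2 := hC2 x.2 (by linarith [(abs_le.1 (d2 ⟨q - 1, by omega⟩)).2])
    (fun k => ((norm_le_pi_norm x.2 k).trans (norm_snd_le _)).trans hxn)
  have hn : ‖y‖ ≤ 1 + ∑ a, (y.1 a ^ 2 + y.2 a ^ 2) := by
    have hs : ∀ a, y.1 a ^ 2 + y.2 a ^ 2 ≤ ∑ a, (y.1 a ^ 2 + y.2 a ^ 2) := fun a =>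
      Finset.single_le_sum (f := fun a => y.1 a ^ 2 + y.2 a ^ 2)
        (fun i _ => by positivity) (Finset.mem_univ a)
    have hpos : 0 ≤ 1 + ∑ a, (y.1 a ^ 2 + y.2 a ^ 2) :=
      add_nonneg zero_le_one (Finset.sum_nonneg fun i _ => by positivity)
    rw [Prod.norm_def]
    refine max_le ((pi_norm_le_iff_of_nonneg hpos).2 fun a => ?_)
      ((pi_norm_le_iff_of_nonneg hpos).2 fun a => ?_)
    · rw [Real.norm_eq_abs]
      nlinarith [hs a, sq_abs (y.1 a), sq_nonneg (|y.1 a| - 1), sq_nonneg (y.2 a)]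
    · rw [Real.norm_eq_abs]
      nlinarith [hs a, sq_abs (y.2 a), sq_nonneg (|y.2 a| - 1), sq_nonneg (y.1 a)]
  rw [phi_apply, ← Finset.sum_add_distrib]
  have : ∀ a ∈ Finset.univ, (∑ k : Fin p, x.1 k * y.1 a ^ ((k:ℕ) + 1)) +
      (∑ s : Fin q, x.2 s * y.2 a ^ ((s:ℕ) + 1)) + g * y.1 a * y.2 a ≤
      (C1 + C2) - (y.1 a ^ 2 + y.2 a ^ 2) := by
    intro a _
    have hg : g * y.1 a * y.2 a ≤ |g| / 2 * (y.1 a ^ 2 + y.2 a ^ 2) := by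
      calc g * y.1 a * y.2 a ≤ |g * y.1 a * y.2 a| := le_abs_self _
        _ = |g| * (|y.1 a| * |y.2 a|) := by rw [abs_mul, abs_mul]; ring
        _ ≤ |g| * ((y.1 a ^ 2 + y.2 a ^ 2) / 2) := by
            gcongr
            nlinarith [sq_nonneg (|y.1 a| - |y.2 a|), sq_abs (y.1 a), sq_abs (y.2 a)]
        _ = _ := by ring
    linarith [b1 (y.1 a), b2 (y.2 a)]
  have h3 := Finset.sum_le_sum this
  rw [Finset.sum_sub_distrib] at h3
  simp only [Finset.sum_const, Finset.card_univ, Fintype.card_fin, nsmul_eq_mul] at h3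
  linarith
theorem stmt18 (N p q : ℕ) (hN : 1 ≤ N) (hp : 4 ≤ p) (hpe : Even p)
    (hq : 4 ≤ q) (hqe : Even q) (g : ℝ)
    (Z : (Fin p → ℝ) × (Fin q → ℝ) → ℝ)
    (hZ : ∀ t : Fin p → ℝ, ∀ tt : Fin q → ℝ,
      Z (t, tt) = (1 / (N.factorial : ℝ)) *
        ∫ lam : Fin N → ℝ, ∫ mu : Fin N → ℝ,
          vdm lam * vdm mu *
            ∏ a : Fin N, Real.exp
              ((∑ k : Fin p, t k * lam a ^ ((k : ℕ) + 1)) +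
               (∑ s : Fin q, tt s * mu a ^ ((s : ℕ) + 1)) + g * lam a * mu a)) :
    ContDiffOn ℝ (⊤ : ℕ∞) Z { pt : (Fin p → ℝ) × (Fin q → ℝ) |
        pt.1 ⟨p - 1, by omega⟩ < 0 ∧ pt.2 ⟨q - 1, by omega⟩ < 0 } ∧
    ∀ t : Fin p → ℝ, ∀ tt : Fin q → ℝ,
      t ⟨p - 1, by omega⟩ < 0 → tt ⟨q - 1, by omega⟩ < 0 →
      (∑ s ∈ Finset.univ.filter (fun s : Fin q => (s : ℕ) ≠ 0),
          ((s : ℕ) + 1 : ℝ) * tt s *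
            fderiv ℝ Z (t, tt)
              (0, Pi.single ⟨(s : ℕ) - 1, lt_of_le_of_lt (Nat.sub_le _ _) s.isLt⟩ 1)) +
        g * fderiv ℝ Z (t, tt) (Pi.single ⟨0, by omega⟩ 1, 0) +
        (N : ℝ) * tt ⟨0, by omega⟩ * Z (t, tt) = 0 := by
  have hsm : ContDiffOn ℝ (⊤ : ℕ∞) Z { pt : (Fin p → ℝ) × (Fin q → ℝ) |
        pt.1 ⟨p - 1, by omega⟩ < 0 ∧ pt.2 ⟨q - 1, by omega⟩ < 0 } := by
    have : (volume : Measure ((Fin N → ℝ) × (Fin N → ℝ))).IsAddHaarMeasure :=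
      MeasureTheory.Measure.prod.instIsAddHaarMeasure _ _
    have hψ : Continuous (fun y : (Fin N → ℝ) × (Fin N → ℝ) => ∑ a, g * y.1 a * y.2 a) := by
      fun_prop
    have hU : IsOpen { pt : (Fin p → ℝ) × (Fin q → ℝ) |
        pt.1 ⟨p - 1, by omega⟩ < 0 ∧ pt.2 ⟨q - 1, by omega⟩ < 0 } := by
      apply IsOpen.inter
      · exact isOpen_lt ((continuous_apply _).comp continuous_fst) continuous_const
      · exact isOpen_lt ((continuous_apply _).comp continuous_snd) continuous_const
    have hc : ContDiffOn ℝ (⊤ : ℕ∞) (fun x => (1 / (N.factorial : ℝ)) *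
        ∫ y : (Fin N → ℝ) × (Fin N → ℝ),
          Real.exp (phi N p q y x + ∑ a, g * y.1 a * y.2 a) • wt N y)
        { pt : (Fin p → ℝ) × (Fin q → ℝ) |
        pt.1 ⟨p - 1, by omega⟩ < 0 ∧ pt.2 ⟨q - 1, by omega⟩ < 0 } := by
      refine contDiffOn_const.mul (contDiffOn_infty.2 fun n => ?_)
      exact laplace_contDiffOn volume (phi_cont N p q) (phi_PG N p q) hψ hU
        (fun x₀ h0 => phi_bound N p q hp hpe hq hqe g x₀ h0.1 h0.2) n (wt_cont N) (wt_PG N)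
    refine hc.congr ?_
    rintro ⟨t, tt⟩ h0
    obtain ⟨ε, hε, C, hC⟩ := phi_bound N p q hp hpe hq hqe g (t, tt) h0.1 h0.2
    have hint := laplace_integrable (volume : Measure ((Fin N → ℝ) × (Fin N → ℝ)))
      (phi_cont N p q) hψ (wt_cont N) (wt_PG N) (t, tt)
      (hC _ (Metric.mem_ball_self hε))
    rw [hZ]
    beta_reduce
    rw [Measure.volume_eq_prod] at hint ⊢
    rw [integral_prod _ hint]
    congr 1
    refine integral_congr_ae (Filter.Eventually.of_forall fun lam => ?_)
    refine integral_congr_ae (Filter.Eventually.of_forall fun mu => ?_)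
    simp only [phi_apply, wt, smul_eq_mul]
    rw [← Finset.sum_add_distrib, Real.exp_sum, mul_comm]
  refine ⟨hsm, fun t tt h1 h2 => ?_⟩
  have hU : { pt : (Fin p → ℝ) × (Fin q → ℝ) |
        pt.1 ⟨p - 1, by omega⟩ < 0 ∧ pt.2 ⟨q - 1, by omega⟩ < 0 } ∈ nhds (t, tt) := by
    apply IsOpen.mem_nhds
    · apply IsOpen.inter
      · exact isOpen_lt ((continuous_apply _).comp continuous_fst) continuous_const
      · exact isOpen_lt ((continuous_apply _).comp continuous_snd) continuous_const
    · exact ⟨h1, h2⟩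
  have hd : DifferentiableAt ℝ Z (t, tt) :=
    (hsm.contDiffAt hU).differentiableAt (by simp)
  have hp0 : 0 < p := by omega
  have hinv : ∀ e : ℝ, Real.exp (N * ∑ s : Fin q, tt s * e ^ ((s:ℕ) + 1)) *
      Z (t + e • (g • Pi.single ⟨0, hp0⟩ 1 : Fin p → ℝ), shT tt e) = Z (t, tt) := by
    intro e
    rw [hZ, hZ, shift_integral hp0 g t tt e]
    ring
  have hexp : HasDerivAt (fun e : ℝ => Real.exp (N * ∑ s : Fin q, tt s * e ^ ((s:ℕ) + 1)))
      (N * tt ⟨0, by omega⟩) 0 := by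
    have h3 : HasDerivAt (fun e : ℝ => ∑ s : Fin q, tt s * e ^ ((s:ℕ) + 1))
        (∑ s : Fin q, tt s * (((((s:ℕ) + 1 : ℕ)) : ℝ) * (0:ℝ) ^ ((s:ℕ) + 1 - 1))) 0 :=
      HasDerivAt.fun_sum fun s _ => (hasDerivAt_pow _ _).const_mul _
    refine ((h3.const_mul (N:ℝ)).exp).congr_deriv ?_
    have h4 : (∑ s : Fin q, tt s * (((((s:ℕ) + 1 : ℕ)) : ℝ) * (0:ℝ) ^ ((s:ℕ) + 1 - 1))) =
        tt ⟨0, by omega⟩ := by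
      rw [Finset.sum_eq_single (⟨0, by omega⟩ : Fin q)]
      · simp
      · intro b _ hb
        have : (b:ℕ) ≠ 0 := fun h => hb (Fin.ext h)
        simp [this]
      · simp
    rw [h4]
    simp
  have hpath : HasDerivAt (fun e : ℝ => (t + e • (g • Pi.single ⟨0, hp0⟩ 1 : Fin p → ℝ), shT tt e))
      ((g • Pi.single ⟨0, hp0⟩ 1 : Fin p → ℝ),
        ∑ s ∈ Finset.univ.filter (fun s : Fin q => (s : ℕ) ≠ 0),
          (((s : ℕ) + 1 : ℝ) * tt s) •
              (Pi.single ⟨(s : ℕ) - 1, lt_of_le_of_lt (Nat.sub_le _ _) s.isLt⟩ 1 : Fin q → ℝ)) 0 := by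
    refine HasDerivAt.prodMk ?_ (shT_deriv tt)
    have := ((hasDerivAt_id (0:ℝ)).smul_const (g • Pi.single ⟨0, hp0⟩ 1 : Fin p → ℝ)).const_add t
    simpa using this
  have h00 : (t + (0:ℝ) • (g • Pi.single ⟨0, hp0⟩ 1 : Fin p → ℝ), shT tt 0) = (t, tt) := by
    rw [shT_zero]; simp
  have hdz : HasFDerivAt Z (fderiv ℝ Z (t, tt))
      (t + (0:ℝ) • (g • Pi.single ⟨0, hp0⟩ 1 : Fin p → ℝ), shT tt 0) := by
    rw [h00]; exact hd.hasFDerivAt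
  have hcomp := hexp.mul (hdz.comp_hasDerivAt (0:ℝ) hpath)
  have hconst : HasDerivAt (fun _ : ℝ => Z (t, tt)) 0 0 := hasDerivAt_const _ _
  have heq := hcomp.unique (hconst.congr_of_eventuallyEq
    (Filter.Eventually.of_forall fun e => hinv e))
  simp only [Function.comp, h00] at heq
  have hsplit : ((g • Pi.single ⟨0, hp0⟩ 1 : Fin p → ℝ),
        ∑ s ∈ Finset.univ.filter (fun s : Fin q => (s : ℕ) ≠ 0),
          (((s : ℕ) + 1 : ℝ) * tt s) •
              (Pi.single ⟨(s : ℕ) - 1, lt_of_le_of_lt (Nat.sub_le _ _) s.isLt⟩ 1 : Fin q → ℝ)) =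
      g • ((Pi.single ⟨0, hp0⟩ 1 : Fin p → ℝ), (0 : Fin q → ℝ)) +
      ∑ s ∈ Finset.univ.filter (fun s : Fin q => (s : ℕ) ≠ 0),
          (((s : ℕ) + 1 : ℝ) * tt s) • ((0 : Fin p → ℝ),
              (Pi.single ⟨(s : ℕ) - 1, lt_of_le_of_lt (Nat.sub_le _ _) s.isLt⟩ 1 : Fin q → ℝ)) := by
    apply Prod.ext
    · simp [Prod.fst_sum]
    · simp [Prod.snd_sum]
  rw [hsplit, map_add, map_smul, map_sum] at heq
  simp only [map_smul, smul_eq_mul] at heq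
  simp at heq
  linarith
end
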